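/- Let d ≥ 1 be an odd integer and let k0,k1,k2,k3 be nonzero elements of F with k0^2 = q^{-d-1}. Then the representation E(k0,k1,k2,k3) of H_q is irreducible if and only if all of the following hold: (1) q^i ≠ 1 for all even i with 2 ≤ i ≤ d-1; (2) k0^2 ≠ q^{-i} for all even i with 2 ≤ i ≤ d-1; (3) k0k1k2k3 ≠ q^{-i}, k0k1^{-1}k2k3 ≠ q^{-i}, k0k1k2^{-1}k3 ≠ q^{-i}, and k0k1k2k3^{-1} ≠ q^{-i} for all odd i with 1 ≤ i ≤ d. -/

import Mathlib

/-!
On `E(k₀,k₁,k₂,k₃)` the operator `T₀ - k₀` has rank at most `(d - 1)/2`, so the `k₀`-eigenspace of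
`T₀` has more than half the dimension `d + 1` (`Chain.rank`). This one fact drives both directions,
together with the remark that a common eigenvector of `T₀` and `T₃` generates a sequence
`w₀, w₁, …` satisfying the Verma relations, i.e. the formulas defining `E` (`chain_of_eig`), and
that in an irreducible space of dimension `n` the vectors `w₀, …, wₙ₋₁` form a basis
(`Chain.basis`).

Conditions imply irreducibility. If `E` is reducible, some proper invariant subspace or quotient
again has a `k₀`-eigenspace of more than half its dimension (`descend`); by induction there is an
irreducible `U` of dimension `n ≤ d` with this property. The eigenspace meets an eigenspace of `T₃`,
say with eigenvalue `κ = k₃^{±1}`, and the resulting sequence has `wₙ` in the span of its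
predecessors. Reading off leading coefficients, odd `n` gives `k₀ k₁^{±1} k₂^{±1} κ qⁿ = 1`, which is
excluded (`no_odd`). For even `n` one finds `k₀² qⁿ = 1` or `qⁿ = 1`, or else that `κ ≠ κ⁻¹` and the
`κ`-eigenspace of `T₃` has dimension at least `n/2 + 1`. The eigenspace of `T₀` also meets an
eigenspace of `T₁`, and the reflected sequence (`Rep4.mirror`) shows that the `κ⁻¹`-eigenspace of
`T₃` has dimension at least `n/2`. These dimensions add up to more than `n` (`no_simple`).

Irreducibility implies the conditions. If a coefficient of `vᵢ₋₁` in the action on `vᵢ` vanishes,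
then `vᵢ, …, v_d` span a proper invariant subspace (`Chain.nonvanishing`). This yields the conditions
on `qⁱ`, on `k₀²`, and on `k₀ k₁ k₂^{±1} k₃`. For the other two, `v_d` is a common eigenvector of `T₀`
and `T₁`, so it generates a sequence for the reflected representation. The rank bound forces that
sequence to terminate after a basis (`Chain.truncation`), and the same argument applies to it.
-/

universe u

namespace DAHA

variable {F : Type*} [Field F]

/-- A representation of the universal DAHA `H_q` of type `(C₁∨, C₁)` on `V`:
a quadruple of invertible operators (indexed by `ZMod 4`) such that each
`Tᵢ + Tᵢ⁻¹` commutes with every `Tⱼ` and `T₀ T₁ T₂ T₃ = q⁻¹ • id`. -/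
def IsRep {V : Type*} [AddCommGroup V] [Module F V] (q : F)
    (T : ZMod 4 → Module.End F V) : Prop :=
  (∀ i, IsUnit (T i)) ∧
  (∀ i j, Commute (T i + Ring.inverse (T i)) (T j)) ∧
  (T 0 * T 1 * T 2 * T 3 = q⁻¹ • (1 : Module.End F V))

/-- Irreducibility: `V ≠ 0` and the only invariant subspaces are `⊥` and `⊤`. -/
def Irred {V : Type*} [AddCommGroup V] [Module F V]
    (T : ZMod 4 → Module.End F V) : Prop :=
  (∃ v : V, v ≠ 0) ∧
  ∀ W : Submodule F V, (∀ i, ∀ w ∈ W, T i w ∈ W) → W = ⊥ ∨ W = ⊤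

/-- Isomorphism of two operator quadruples. -/
def Iso {V : Type*} {V' : Type*} [AddCommGroup V] [Module F V]
    [AddCommGroup V'] [Module F V']
    (T : ZMod 4 → Module.End F V) (T' : ZMod 4 → Module.End F V') : Prop :=
  ∃ S : V ≃ₗ[F] V', ∀ i v, S (T i v) = T' i (S v)

/-- The twist of an operator quadruple by `ε ∈ ℤ/4ℤ`. -/
def twist {V : Type*} [AddCommGroup V] [Module F V]
    (T : ZMod 4 → Module.End F V) (ε : ZMod 4) : ZMod 4 → Module.End F V :=
  fun i => T (i + ε)

/-- The standard basis vectors `v_i` of `Fin (d+1) → F`, extended by `0` beyond index `d`. -/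
noncomputable def e (F : Type*) [Field F] (d i : ℕ) : Fin (d + 1) → F :=
  if h : i < d + 1 then Pi.single (⟨i, h⟩ : Fin (d + 1)) (1 : F) else 0

/-- The basis vectors `m_i` of `ℕ →₀ F`. -/
noncomputable def mv (F : Type*) [Field F] (i : ℕ) : ℕ →₀ F := Finsupp.single i 1

/-- The defining action of the even-dimensional module `E(k₀,k₁,k₂,k₃)` (for `d` odd)
on the basis `v_0, …, v_d` of `Fin (d+1) → F`. -/
def IsE (q k0 k1 k2 k3 : F) (d : ℕ)
    (T : ZMod 4 → Module.End F (Fin (d + 1) → F)) : Prop :=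
  (∀ i : ℕ, Even i → 2 ≤ i → i ≤ d - 1 →
    T 0 (e F d i) = (k0⁻¹ * (q ^ i)⁻¹ * (1 - q ^ i) * (1 - k0 ^ 2 * q ^ i)) • e F d (i - 1)
      + (k0 + k0⁻¹ - k0⁻¹ * (q ^ i)⁻¹) • e F d i) ∧
  (∀ i : ℕ, Odd i → i ≤ d - 2 →
    T 0 (e F d i) = (k0⁻¹ * (q ^ (i + 1))⁻¹) • (e F d i - e F d (i + 1))) ∧
  (T 0 (e F d 0) = k0 • e F d 0) ∧
  (T 0 (e F d d) = k0 • e F d d) ∧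
  (∀ i : ℕ, Even i → 2 ≤ i → i ≤ d - 1 →
    T 1 (e F d i) = (-(k1 * (1 - q ^ i) * (1 - k0 ^ 2 * q ^ i))) • e F d (i - 1)
      + k1 • e F d i + k1⁻¹ • e F d (i + 1)) ∧
  (∀ i : ℕ, Odd i → i ≤ d → T 1 (e F d i) = k1⁻¹ • e F d i) ∧
  (T 1 (e F d 0) = k1 • e F d 0 + k1⁻¹ • e F d 1) ∧
  (∀ i : ℕ, Even i → i ≤ d - 1 →
    T 2 (e F d i) = (k0⁻¹ * k1⁻¹ * k3⁻¹ * (q ^ (i + 1))⁻¹) • (e F d i - e F d (i + 1))) ∧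
  (∀ i : ℕ, Odd i → i ≤ d →
    T 2 (e F d i) = ((k0 * k1 * k3 * q ^ i)⁻¹ * (k0 * k1 * k3 * q ^ i - k2)
        * (k0 * k1 * k3 * q ^ i - k2⁻¹)) • e F d (i - 1)
      + (k2 + k2⁻¹ - k0⁻¹ * k1⁻¹ * k3⁻¹ * (q ^ i)⁻¹) • e F d i) ∧
  (∀ i : ℕ, Even i → i ≤ d - 1 → T 3 (e F d i) = k3 • e F d i) ∧
  (∀ i : ℕ, Odd i → i ≤ d - 2 →
    T 3 (e F d i) = (-(k3⁻¹ * (k0 * k1 * k3 * q ^ i - k2)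
        * (k0 * k1 * k3 * q ^ i - k2⁻¹))) • e F d (i - 1)
      + k3⁻¹ • e F d i + k3 • e F d (i + 1)) ∧
  (T 3 (e F d d) = (-(k3⁻¹ * (k0 * k1 * k3 * q ^ d - k2)
        * (k0 * k1 * k3 * q ^ d - k2⁻¹))) • e F d (d - 1)
      + k3⁻¹ • e F d d)

/-- The defining action of the odd-dimensional module `O(k₀,k₁,k₂,k₃)` (for `d` even)
on the basis `v_0, …, v_d` of `Fin (d+1) → F`. -/
def IsO (q k0 k1 k2 k3 : F) (d : ℕ)
    (T : ZMod 4 → Module.End F (Fin (d + 1) → F)) : Prop :=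
  (∀ i : ℕ, Even i → 2 ≤ i → i ≤ d →
    T 0 (e F d i) = (k0⁻¹ * (q ^ i)⁻¹ * (1 - q ^ i) * (1 - k0 ^ 2 * q ^ i)) • e F d (i - 1)
      + (k0 + k0⁻¹ - k0⁻¹ * (q ^ i)⁻¹) • e F d i) ∧
  (∀ i : ℕ, Odd i → i ≤ d - 1 →
    T 0 (e F d i) = (k0⁻¹ * (q ^ (i + 1))⁻¹) • (e F d i - e F d (i + 1))) ∧
  (T 0 (e F d 0) = k0 • e F d 0) ∧
  (∀ i : ℕ, Even i → 2 ≤ i → i ≤ d - 2 →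
    T 1 (e F d i) = (-(k1 * (1 - q ^ i) * (1 - k0 ^ 2 * q ^ i))) • e F d (i - 1)
      + k1 • e F d i + k1⁻¹ • e F d (i + 1)) ∧
  (∀ i : ℕ, Odd i → i ≤ d - 1 → T 1 (e F d i) = k1⁻¹ • e F d i) ∧
  (T 1 (e F d 0) = k1 • e F d 0 + k1⁻¹ • e F d 1) ∧
  (T 1 (e F d d) = (-(k1 * (1 - q ^ d) * (1 - k0 ^ 2 * q ^ d))) • e F d (d - 1) + k1 • e F d d) ∧
  (∀ i : ℕ, Even i → i ≤ d - 2 →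
    T 2 (e F d i) = (k2 * q ^ (d - i)) • (e F d i - e F d (i + 1))) ∧
  (∀ i : ℕ, Odd i → i ≤ d - 1 →
    T 2 (e F d i) = (-(k2 * (1 - (k2 ^ 2)⁻¹ * (q ^ (d + 1 - i))⁻¹) * (1 - q ^ (d - i + 1)))) • e F d (i - 1)
      + (k2 + k2⁻¹ - k2 * q ^ (d - i + 1)) • e F d i) ∧
  (T 2 (e F d d) = k2 • e F d d) ∧
  (∀ i : ℕ, Even i → i ≤ d → T 3 (e F d i) = k3 • e F d i) ∧
  (∀ i : ℕ, Odd i → i ≤ d - 1 →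
    T 3 (e F d i) = (-(k3⁻¹ * (1 - (k2 ^ 2)⁻¹ * (q ^ (d + 1 - i))⁻¹)
        * (1 - (q ^ (d + 1 - i))⁻¹))) • e F d (i - 1)
      + k3⁻¹ • e F d i + k3 • e F d (i + 1))

/-- The defining action of the infinite-dimensional module `M(k₀,k₁,k₂,k₃)`
on the basis `m_0, m_1, …` of `ℕ →₀ F`. -/
def IsM (q k0 k1 k2 k3 : F) (T : ZMod 4 → Module.End F (ℕ →₀ F)) : Prop :=
  (∀ i : ℕ, Even i → 2 ≤ i →
    T 0 (mv F i) = (k0⁻¹ * (q ^ i)⁻¹ * (1 - q ^ i) * (1 - k0 ^ 2 * q ^ i)) • mv F (i - 1)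
      + (k0 + k0⁻¹ - k0⁻¹ * (q ^ i)⁻¹) • mv F i) ∧
  (∀ i : ℕ, Odd i →
    T 0 (mv F i) = (k0⁻¹ * (q ^ (i + 1))⁻¹) • (mv F i - mv F (i + 1))) ∧
  (T 0 (mv F 0) = k0 • mv F 0) ∧
  (∀ i : ℕ, Even i → 2 ≤ i →
    T 1 (mv F i) = (-(k1 * (1 - q ^ i) * (1 - k0 ^ 2 * q ^ i))) • mv F (i - 1)
      + k1 • mv F i + k1⁻¹ • mv F (i + 1)) ∧
  (∀ i : ℕ, Odd i → T 1 (mv F i) = k1⁻¹ • mv F i) ∧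
  (T 1 (mv F 0) = k1 • mv F 0 + k1⁻¹ • mv F 1) ∧
  (∀ i : ℕ, Even i →
    T 2 (mv F i) = (k0⁻¹ * k1⁻¹ * k3⁻¹ * (q ^ (i + 1))⁻¹) • (mv F i - mv F (i + 1))) ∧
  (∀ i : ℕ, Odd i →
    T 2 (mv F i) = ((k0 * k1 * k3 * q ^ i)⁻¹ * (k0 * k1 * k3 * q ^ i - k2)
        * (k0 * k1 * k3 * q ^ i - k2⁻¹)) • mv F (i - 1)
      + (k2 + k2⁻¹ - k0⁻¹ * k1⁻¹ * k3⁻¹ * (q ^ i)⁻¹) • mv F i) ∧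
  (∀ i : ℕ, Even i → T 3 (mv F i) = k3 • mv F i) ∧
  (∀ i : ℕ, Odd i →
    T 3 (mv F i) = (-(k3⁻¹ * (k0 * k1 * k3 * q ^ i - k2)
        * (k0 * k1 * k3 * q ^ i - k2⁻¹))) • mv F (i - 1)
      + k3⁻¹ • mv F i + k3 • mv F (i + 1))


/-- Operators `T₀, T₁, T₂, T₃` with `(Tᵢ - kᵢ)(Tᵢ - kᵢ⁻¹) = 0` and `T₀ T₁ T₂ T₃ = q⁻¹`. -/
structure Rep4 {V : Type*} [AddCommGroup V] [Module F V] (q k0 k1 k2 k3 : F)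
    (T0 T1 T2 T3 : Module.End F V) : Prop where
  s0 : ∀ v, T0 (T0 v) = (k0 + k0⁻¹) • T0 v - v
  s1 : ∀ v, T1 (T1 v) = (k1 + k1⁻¹) • T1 v - v
  s2 : ∀ v, T2 (T2 v) = (k2 + k2⁻¹) • T2 v - v
  s3 : ∀ v, T3 (T3 v) = (k3 + k3⁻¹) • T3 v - v
  prod : ∀ v, T0 (T1 (T2 (T3 v))) = q⁻¹ • v

/-- The inverse `k + k⁻¹ - T` of an operator with `(T - k)(T - k⁻¹) = 0`. -/
def tinv {V : Type*} [AddCommGroup V] [Module F V] (k : F) (T : Module.End F V) :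
    Module.End F V := (k + k⁻¹) • (1 : Module.End F V) - T

/-- `0` and `V` are the only subspaces invariant under the four operators. -/
def Simple4 {V : Type*} [AddCommGroup V] [Module F V] (T0 T1 T2 T3 : Module.End F V) : Prop :=
  ∀ W : Submodule F V, (∀ w ∈ W, T0 w ∈ W) → (∀ w ∈ W, T1 w ∈ W) → (∀ w ∈ W, T2 w ∈ W) →
    (∀ w ∈ W, T3 w ∈ W) → W = ⊥ ∨ W = ⊤

/-- The Verma-type relations: a sequence `w₀, w₁, …` on which the four operators act by the
formulas for the basis of `M(k₀,k₁,k₂,k₃)`. The `wᵢ` may be linearly dependent or zero. -/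
structure Chain {V : Type*} [AddCommGroup V] [Module F V] (q k0 k1 k2 k3 : F)
    (T0 T1 T2 T3 : Module.End F V) (w : ℕ → V) : Prop where
  T0z : T0 (w 0) = k0 • w 0
  T0a : ∀ m, T0 (w (2 * m + 2)) =
    (k0⁻¹ * (q ^ (2 * m + 2))⁻¹ * ((1 - q ^ (2 * m + 2)) * (1 - k0 ^ 2 * q ^ (2 * m + 2)))) •
      w (2 * m + 1) + (k0 + k0⁻¹ - k0⁻¹ * (q ^ (2 * m + 2))⁻¹) • w (2 * m + 2)
  T0b : ∀ m, T0 (w (2 * m + 1)) =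
    (k0⁻¹ * (q ^ (2 * m + 2))⁻¹) • (w (2 * m + 1) - w (2 * m + 2))
  T1z : T1 (w 0) = k1 • w 0 + k1⁻¹ • w 1
  T1a : ∀ m, T1 (w (2 * m + 2)) =
    (-(k1 * ((1 - q ^ (2 * m + 2)) * (1 - k0 ^ 2 * q ^ (2 * m + 2))))) • w (2 * m + 1)
      + k1 • w (2 * m + 2) + k1⁻¹ • w (2 * m + 3)
  T1b : ∀ m, T1 (w (2 * m + 1)) = k1⁻¹ • w (2 * m + 1)
  T2a : ∀ m, T2 (w (2 * m)) =
    (k0 * k1 * k3 * q ^ (2 * m + 1))⁻¹ • (w (2 * m) - w (2 * m + 1))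
  T2b : ∀ m, T2 (w (2 * m + 1)) =
    ((k0 * k1 * k3 * q ^ (2 * m + 1))⁻¹ * ((k0 * k1 * k3 * q ^ (2 * m + 1) - k2) *
      (k0 * k1 * k3 * q ^ (2 * m + 1) - k2⁻¹))) • w (2 * m)
      + (k2 + k2⁻¹ - (k0 * k1 * k3 * q ^ (2 * m + 1))⁻¹) • w (2 * m + 1)
  T3a : ∀ m, T3 (w (2 * m)) = k3 • w (2 * m)
  T3b : ∀ m, T3 (w (2 * m + 1)) =
    (-(k3⁻¹ * ((k0 * k1 * k3 * q ^ (2 * m + 1) - k2) *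
      (k0 * k1 * k3 * q ^ (2 * m + 1) - k2⁻¹)))) • w (2 * m)
      + k3⁻¹ • w (2 * m + 1) + k3 • w (2 * m + 2)

section Generic

variable {V : Type*} [AddCommGroup V] [Module F V] {q k0 k1 k2 k3 : F}
  {T0 T1 T2 T3 : Module.End F V} {w : ℕ → V}

/-! ### Symmetries of the relations -/

lemma quad_inj {T : Module.End F V} {t : F} (h : ∀ v, T (T v) = t • T v - v) {x y : V}
    (hxy : T x = T y) : x = y := by
  have h1 : ∀ v, v = t • T v - T (T v) := fun v => by rw [h v]; abel
  rw [h1 x, h1 y, hxy]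

lemma tinv_left {T : Module.End F V} {k : F} (h : ∀ v, T (T v) = (k + k⁻¹) • T v - v) (v : V) :
    T (tinv k T v) = v := by
  simp only [tinv, LinearMap.sub_apply, LinearMap.smul_apply, Module.End.one_apply, map_sub,
    map_smul, h v]
  abel

lemma tinv_quad {T : Module.End F V} {k : F} (h : ∀ v, T (T v) = (k + k⁻¹) • T v - v) (v : V) :
    tinv k T (tinv k T v) = (k + k⁻¹) • tinv k T v - v := by
  have e : ∀ u, tinv k T u = (k + k⁻¹) • u - T u := fun u => rfl
  rw [e (tinv k T v), tinv_left h]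

lemma tinv_eig {T : Module.End F V} {k x : F} (hx : x = k ∨ x = k⁻¹) {v : V}
    (h : T v = x • v) : tinv k T v = x⁻¹ • v := by
  simp only [tinv, LinearMap.sub_apply, LinearMap.smul_apply, Module.End.one_apply, h]
  rcases hx with rfl | rfl
  · module
  · rw [inv_inv]; module

lemma Rep4.rot (h : Rep4 q k0 k1 k2 k3 T0 T1 T2 T3) : Rep4 q k1 k2 k3 k0 T1 T2 T3 T0 :=
  ⟨h.s1, h.s2, h.s3, h.s0, fun v => quad_inj h.s0 (by rw [h.prod, map_smul])⟩

lemma Rep4.inv1 (h : Rep4 q k0 k1 k2 k3 T0 T1 T2 T3) : Rep4 q k0 k1⁻¹ k2 k3 T0 T1 T2 T3 :=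
  ⟨h.s0, fun v => by rw [h.s1, inv_inv, add_comm k1], h.s2, h.s3, h.prod⟩

lemma Rep4.inv3 (h : Rep4 q k0 k1 k2 k3 T0 T1 T2 T3) : Rep4 q k0 k1 k2 k3⁻¹ T0 T1 T2 T3 :=
  ⟨h.s0, h.s1, h.s2, fun v => by rw [h.s3, inv_inv, add_comm k3], h.prod⟩

/-- The reflection `(T₀,T₁,T₂,T₃) ↦ (T₀⁻¹,T₃⁻¹,T₂⁻¹,T₁⁻¹)`, which replaces `q` by `q⁻¹`. -/
lemma Rep4.mirror (hq : q ≠ 0) (h : Rep4 q k0 k1 k2 k3 T0 T1 T2 T3) :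
    Rep4 q⁻¹ k0⁻¹ k3 k2 k1 (tinv k0 T0) (tinv k3 T3) (tinv k2 T2) (tinv k1 T1) := by
  refine ⟨fun v => ?_, tinv_quad h.s3, tinv_quad h.s2, tinv_quad h.s1, fun v => ?_⟩
  · rw [tinv_quad h.s0, inv_inv, add_comm k0]
  · have := h.rot.prod (tinv k0 T0 (tinv k3 T3 (tinv k2 T2 (tinv k1 T1 v))))
    rw [tinv_left h.s0, tinv_left h.s3, tinv_left h.s2, tinv_left h.s1] at this
    rw [inv_inv]
    conv_rhs => rw [this]
    rw [smul_smul, mul_inv_cancel₀ hq, one_smul]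

lemma mem_of_tinv {T : Module.End F V} {k : F} {W : Submodule F V}
    (h : ∀ w ∈ W, tinv k T w ∈ W) : ∀ w ∈ W, T w ∈ W := fun w hw => by
  have : T w = (k + k⁻¹) • w - tinv k T w := by
    simp only [tinv, LinearMap.sub_apply, LinearMap.smul_apply, Module.End.one_apply]; abel
  rw [this]
  exact W.sub_mem (W.smul_mem _ hw) (h w hw)

lemma Simple4.mirror (h : Simple4 T0 T1 T2 T3) (k0 k1 k2 k3 : F) :
    Simple4 (tinv k0 T0) (tinv k3 T3) (tinv k2 T2) (tinv k1 T1) :=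
  fun W h0 h3 h2 h1 => h W (mem_of_tinv h0) (mem_of_tinv h1) (mem_of_tinv h2) (mem_of_tinv h3)

/-! ### The sequence generated by a common eigenvector -/

/-- The sequence `w₀ = w`, `wᵢ₊₁ = (1 - k₀k₁k₃qⁱ⁺¹ T₂) wᵢ` for even `i` and
`wᵢ₊₁ = (1 - k₀qⁱ⁺¹ T₀) wᵢ` for odd `i`. -/
noncomputable def seqW (q k0 k1 k3 : F) (T0 T2 : Module.End F V) (w : V) : ℕ → V
  | 0 => w
  | i + 1 => if Even i
      then seqW q k0 k1 k3 T0 T2 w i - (k0 * k1 * k3 * q ^ (i + 1)) • T2 (seqW q k0 k1 k3 T0 T2 w i)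
      else seqW q k0 k1 k3 T0 T2 w i - (k0 * q ^ (i + 1)) • T0 (seqW q k0 k1 k3 T0 T2 w i)

/-- If `y = (1 - μT)x` then the quadratic relation gives the action of `T` on `x` and `y`. -/
lemma quad_step {T : Module.End F V} {k μ : F} (hk : k ≠ 0) (hμ : μ ≠ 0)
    (h : ∀ v, T (T v) = (k + k⁻¹) • T v - v) {x y : V} (hy : y = x - μ • T x) :
    T x = μ⁻¹ • (x - y) ∧
      T y = (μ⁻¹ * ((μ - k) * (μ - k⁻¹))) • x + (k + k⁻¹ - μ⁻¹) • y := by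
  have hx : T x = μ⁻¹ • (x - y) := by
    rw [hy, sub_sub_cancel, smul_smul, inv_mul_cancel₀ hμ, one_smul]
  refine ⟨hx, ?_⟩
  have : T y = T x - μ • ((k + k⁻¹) • T x - x) := by
    conv_lhs => rw [hy]
    rw [map_sub, map_smul, h]
  rw [this, hx]
  match_scalars <;> field_simp <;> ring

/-- One step of the recursion: the product relation yields the action of `T₁` on `x` and `y`. -/
lemma eig_step {κ φ : F} (hq : q ≠ 0) (hk1 : k1 ≠ 0) (hk3 : k3 ≠ 0) (hκ : κ ≠ 0)
    (h : Rep4 q k0 k1 k2 k3 T0 T1 T2 T3) {x p y : V}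
    (h3 : T3 x = k3 • x) (h1 : T1 p = k1⁻¹ • p)
    (h0 : T0 x = (κ⁻¹ * φ) • p + (k0 + k0⁻¹ - κ⁻¹) • x)
    (h2 : T2 x = (κ * k1 * k3 * q)⁻¹ • (x - y)) :
    T1 x = (-(k1 * φ)) • p + k1 • x + k1⁻¹ • y ∧ T1 y = k1⁻¹ • y := by
  -- `T₁(x - y)` is a multiple of `T₀⁻¹ x`
  have e1 : T1 x - T1 y = k1 • x - (k1 * φ) • p := by
    apply quad_inj h.s0
    have := h.prod x
    rw [h3, map_smul, h2] at this
    simp only [map_smul, map_sub] at this ⊢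
    have h4 : T0 (T1 x) - T0 (T1 y) = (κ * k1) • x := by
      have h5 : (κ * k1 * q) • (k3 • (κ * k1 * k3 * q)⁻¹ • (T0 (T1 x) - T0 (T1 y)))
          = (κ * k1 * q) • q⁻¹ • x := by rw [this]
      rw [smul_smul, smul_smul, smul_smul] at h5
      convert h5 using 1
      · rw [show κ * k1 * q * k3 * (κ * k1 * k3 * q)⁻¹ = 1 by field_simp, one_smul]
      · congr 1; field_simp
    have h6 : T0 (T0 x) = (k0 + k0⁻¹) • T0 x - x := h.s0 x
    have h7 : (κ⁻¹ * φ) • T0 p = (κ⁻¹ : F) • T0 x - x := by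
      have : T0 (T0 x) = (κ⁻¹ * φ) • T0 p + (k0 + k0⁻¹ - κ⁻¹) • T0 x := by
        conv_lhs => rw [h0]
        rw [map_add, map_smul, map_smul]
      rw [this] at h6
      rw [eq_sub_iff_add_eq.symm] at h6
      rw [h6]; module
    rw [h4]
    have h8 : (k1 * φ) • T0 p = (κ * k1) • ((κ⁻¹ * φ) • T0 p) := by
      rw [smul_smul]; congr 1; field_simp
    rw [h8, h7]
    match_scalars <;> field_simp; ring
  have e2 := h.s1 (x - y)
  rw [map_sub, e1, map_sub, map_smul, map_smul, h1] at e2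
  have e3 : T1 x = (-(k1 * φ)) • p + k1 • x + k1⁻¹ • y := by
    have : T1 x = k1⁻¹ • (k1 • T1 x) := by rw [smul_smul, inv_mul_cancel₀ hk1, one_smul]
    rw [this, sub_eq_iff_eq_add.1 e2]
    match_scalars <;> field_simp <;> ring
  refine ⟨e3, ?_⟩
  have : T1 y = T1 x - (k1 • x - (k1 * φ) • p) := by rw [← e1]; abel
  rw [this, e3]
  module

/-- A common eigenvector of `T₀` and `T₃` generates a sequence satisfying the Verma relations. -/
lemma chain_of_eig (hq : q ≠ 0) (hk0 : k0 ≠ 0) (hk1 : k1 ≠ 0) (hk2 : k2 ≠ 0) (hk3 : k3 ≠ 0)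
    (h : Rep4 q k0 k1 k2 k3 T0 T1 T2 T3) {v : V} (h0 : T0 v = k0 • v) (h3 : T3 v = k3 • v) :
    Chain q k0 k1 k2 k3 T0 T1 T2 T3 (seqW q k0 k1 k3 T0 T2 v) := by
  set w := seqW q k0 k1 k3 T0 T2 v with hw
  have hb : ∀ m, w (2 * m + 1) = w (2 * m) - (k0 * k1 * k3 * q ^ (2 * m + 1)) • T2 (w (2 * m)) :=
    fun m => by rw [hw, seqW, if_pos (even_two_mul m)]
  have ha : ∀ m, w (2 * m + 2) = w (2 * m + 1) - (k0 * q ^ (2 * m + 2)) • T0 (w (2 * m + 1)) :=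
    fun m => by rw [hw, seqW, if_neg (by simp)]
  have q2 := fun m => quad_step hk2 (by positivity) h.s2 (hb m)
  have q0 := fun m => quad_step hk0 (by positivity) h.s0 (ha m)
  have hφ : ∀ i : ℕ, (k0 * q ^ i - k0) * (k0 * q ^ i - k0⁻¹)
      = (1 - q ^ i) * (1 - k0 ^ 2 * q ^ i) := fun i => by field_simp; ring
  -- the odd-indexed and even-indexed halves of the recursion
  have odd_step : ∀ m, T3 (w (2 * m)) = k3 • w (2 * m) → T1 (w (2 * m + 1)) = k1⁻¹ • w (2 * m + 1) →
      T3 (w (2 * m + 1)) =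
        (-(k3⁻¹ * ((k0 * k1 * k3 * q ^ (2 * m + 1) - k2) *
          (k0 * k1 * k3 * q ^ (2 * m + 1) - k2⁻¹)))) • w (2 * m)
          + k3⁻¹ • w (2 * m + 1) + k3 • w (2 * m + 2) ∧
      T3 (w (2 * m + 2)) = k3 • w (2 * m + 2) := fun m hx hy => by
    have := eig_step (k1 := k3⁻¹) (k3 := k1⁻¹) (κ := k0 * k1 * k3 * q ^ (2 * m + 1)) hq
      (inv_ne_zero hk3) (inv_ne_zero hk1) (by positivity) h.rot.rot.inv1.inv3 hy
      (by rw [inv_inv]; exact hx) (q2 m).2 (y := w (2 * m + 2))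
      (by rw [(q0 m).1]; congr 2; field_simp; ring)
    rw [inv_inv] at this
    exact this
  have zero_step : T1 (w 0) = k1 • w 0 + k1⁻¹ • w 1 ∧ T1 (w 1) = k1⁻¹ • w 1 := by
    have := eig_step (κ := k0) (φ := 0) (p := 0) (x := w 0) (y := w 1) hq hk1 hk3 hk0 h h3
      (by simp) (by rw [show w 0 = v from rfl, h0]; module) (by simpa using (q2 0).1)
    simpa using this
  have even_step : ∀ m, T3 (w (2 * m + 2)) = k3 • w (2 * m + 2) →
      T1 (w (2 * m + 1)) = k1⁻¹ • w (2 * m + 1) →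
      T1 (w (2 * m + 2)) =
        (-(k1 * ((1 - q ^ (2 * m + 2)) * (1 - k0 ^ 2 * q ^ (2 * m + 2))))) • w (2 * m + 1)
          + k1 • w (2 * m + 2) + k1⁻¹ • w (2 * m + 3) ∧
      T1 (w (2 * m + 3)) = k1⁻¹ • w (2 * m + 3) := fun m hx hy => by
    rw [← hφ]
    exact eig_step (κ := k0 * q ^ (2 * m + 2)) hq hk1 hk3 (by positivity) h hx hy (q0 m).2
      (by rw [show 2 * m + 2 = 2 * (m + 1) by ring, (q2 (m + 1)).1]; congr 1; ring_nf)
  have main : ∀ m, T3 (w (2 * m)) = k3 • w (2 * m) ∧ T1 (w (2 * m + 1)) = k1⁻¹ • w (2 * m + 1) := by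
    intro m
    induction m with
    | zero => exact ⟨h3, zero_step.2⟩
    | succ m ih =>
      have h5 := (odd_step m ih.1 ih.2).2
      exact ⟨h5, (even_step m h5 ih.2).2⟩
  refine ⟨h0, fun m => ?_, fun m => ?_, zero_step.1, fun m => ?_, fun m => (main m).2,
    fun m => (q2 m).1, fun m => (q2 m).2, fun m => (main m).1,
    fun m => (odd_step m (main m).1 (main m).2).1⟩
  · rw [(q0 m).2, hφ, mul_inv]
  · rw [(q0 m).1, mul_inv]
  · exact (even_step m (odd_step m (main m).1 (main m).2).2 (main m).2).1

end Generic

section Linear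

variable {V : Type*} [AddCommGroup V] [Module F V] {q k0 k1 k2 k3 : F}
  {T0 T1 T2 T3 : Module.End F V} {w : ℕ → V}

/-! ### Initial segments of a sequence -/

/-- The span of `w₀, …, wₙ₋₁`. -/
def initSpan (F : Type*) [Field F] {V : Type*} [AddCommGroup V] [Module F V] (w : ℕ → V) (n : ℕ) :
    Submodule F V :=
  Submodule.span F (w '' {j | j < n})

/-- The span of `wᵢ, wᵢ₊₁, …`. -/
def tailSpan (F : Type*) [Field F] {V : Type*} [AddCommGroup V] [Module F V] (w : ℕ → V) (i : ℕ) :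
    Submodule F V :=
  Submodule.span F (w '' {j | i ≤ j})

lemma span_stable {T : Module.End F V} {s : Set ℕ} {P : Submodule F V}
    (h : ∀ j ∈ s, T (w j) ∈ P) : ∀ x ∈ Submodule.span F (w '' s), T x ∈ P := by
  intro x hx
  have : Submodule.span F (w '' s) ≤ P.comap T := by
    rw [Submodule.span_le]
    rintro _ ⟨j, hj, rfl⟩
    exact h j hj
  exact this hx

lemma mem_initSpan {j n : ℕ} (h : j < n) : w j ∈ initSpan F w n :=
  Submodule.subset_span ⟨j, h, rfl⟩

lemma mem_tailSpan {j i : ℕ} (h : i ≤ j) : w j ∈ tailSpan F w i :=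
  Submodule.subset_span ⟨j, h, rfl⟩

lemma initSpan_mono {m n : ℕ} (h : m ≤ n) : initSpan F w m ≤ initSpan F w n :=
  Submodule.span_mono (Set.image_mono fun _ hj => lt_of_lt_of_le hj h)

lemma initSpan_succ_le {n : ℕ} (h : w n ∈ initSpan F w n) :
    initSpan F w (n + 1) = initSpan F w n := by
  refine le_antisymm ?_ (initSpan_mono n.le_succ)
  rw [initSpan, Submodule.span_le]
  rintro _ ⟨j, hj, rfl⟩
  rcases (Nat.lt_succ_iff_lt_or_eq.1 hj) with hj | rfl
  exacts [mem_initSpan hj, h]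

lemma initSpan_decomp {n : ℕ} {x : V} (h : x ∈ initSpan F w (n + 1)) :
    ∃ a : F, ∃ p ∈ initSpan F w n, x = a • w n + p := by
  have : w '' {j | j < n + 1} = insert (w n) (w '' {j | j < n}) := by
    rw [← Set.image_insert_eq]; congr 1; ext j; simp; omega
  rw [initSpan, this, Submodule.mem_span_insert] at h
  exact h

lemma coeff_zero {P : Submodule F V} {v : V} (hv : v ∉ P) {x : F} (h : x • v ∈ P) : x = 0 := by
  by_contra hx
  exact hv ((P.smul_mem_iff hx).1 h)

lemma linInd_of_notMem {n : ℕ} (h : ∀ j < n, w j ∉ initSpan F w j) :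
    LinearIndependent F (fun j : Fin n => w j) := by
  induction n with
  | zero => exact linearIndependent_empty_type
  | succ n ih =>
    rw [linearIndependent_finSucc']
    refine ⟨ih fun j hj => h j (by omega), fun hm => h n (by omega) ?_⟩
    refine Submodule.span_mono ?_ hm
    rintro _ ⟨j, rfl⟩
    exact ⟨j, j.2, rfl⟩

/-- If `T` preserves `P` and acts on `v ∉ P` modulo `P` as the scalar
`s`, then `s` is a root of the quadratic relation. -/
lemma lead_quad {T : Module.End F V} {k s : F} {P : Submodule F V} {v p : V} (hk : k ≠ 0)
    (h : ∀ v, T (T v) = (k + k⁻¹) • T v - v) (hP : ∀ x ∈ P, T x ∈ P) (hv : v ∉ P) (hp : p ∈ P)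
    (hT : T v = s • v + p) : s = k ∨ s = k⁻¹ := by
  have e := h v
  have : (s ^ 2 - (k + k⁻¹) * s + 1) • v ∈ P := by
    have e2 : (s ^ 2 - (k + k⁻¹) * s + 1) • v = (k + k⁻¹) • p - s • p - T p := by
      rw [hT, map_add, map_smul, hT] at e
      rw [← sub_eq_zero] at e ⊢
      rw [← e]; module
    rw [e2]
    exact P.sub_mem (P.sub_mem (P.smul_mem _ hp) (P.smul_mem _ hp)) (hP p hp)
  have h0 := coeff_zero hv this
  have h1 : (s - k) * (s - k⁻¹) = 0 := by
    rw [← h0]; field_simp; ring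
  rcases mul_eq_zero.1 h1 with h | h
  exacts [Or.inl (sub_eq_zero.1 h), Or.inr (sub_eq_zero.1 h)]

lemma lead_eig {T : Module.End F V} {a x y z : F} {P : Submodule F V} {v v' p p' : V}
    (hP : ∀ x ∈ P, T x ∈ P) (hv : v ∉ P) (hp : p ∈ P) (hv' : v' = a • v + p) (hx : T v' = x • v')
    (hp' : p' ∈ P) (hT : T v = y • v + z • v' + p') : a * (y + z * a) = x * a := by
  have : (a * (y + z * a) - x * a) • v ∈ P := by
    have e2 : (a * (y + z * a) - x * a) • v = x • p - T p - (a * z) • p - a • p' := by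
      have e : T v' = a • T v + T p := by conv_lhs => rw [hv', map_add, map_smul]
      rw [hx, hT, hv'] at e
      rw [← sub_eq_zero] at e ⊢
      have := congrArg (fun t => -t) e
      simp only [neg_zero] at this
      rw [← this]; module
    rw [e2]
    exact P.sub_mem (P.sub_mem (P.sub_mem (P.smul_mem _ hp) (hP p hp)) (P.smul_mem _ hp))
      (P.smul_mem _ hp')
  exact sub_eq_zero.1 (coeff_zero hv this)

/-- A triangularity argument: the vectors `L w₁, L w₃, …` have leading terms `w₂, w₄, …`. -/
lemma odd_indep {L : Module.End F V} {c : ℕ → F} (hc : ∀ m, c m ≠ 0)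
    (hL : ∀ m, ∃ p ∈ initSpan F w (2 * m + 2), L (w (2 * m + 1)) = c m • w (2 * m + 2) + p)
    {M : ℕ} (hw : ∀ m < M, w (2 * m + 2) ∉ initSpan F w (2 * m + 2)) (β : ℕ → F)
    (h : ∑ m ∈ Finset.range M, β m • L (w (2 * m + 1)) = 0) : ∀ m < M, β m = 0 := by
  induction M with
  | zero => intro m hm; omega
  | succ M ih =>
    rw [Finset.sum_range_succ] at h
    have hM : β M = 0 := by
      obtain ⟨p, hp, e⟩ := hL M
      have h1 : ∑ m ∈ Finset.range M, β m • L (w (2 * m + 1)) ∈ initSpan F w (2 * M + 2) := by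
        refine Submodule.sum_mem _ fun m hm => Submodule.smul_mem _ _ ?_
        obtain ⟨p', hp', e'⟩ := hL m
        have := Finset.mem_range.1 hm
        rw [e']
        exact Submodule.add_mem _ (Submodule.smul_mem _ _ (mem_initSpan (by omega)))
          (initSpan_mono (by omega) hp')
      have h2 : (β M * c M) • w (2 * M + 2) ∈ initSpan F w (2 * M + 2) := by
        have : (β M * c M) • w (2 * M + 2) =
            -(∑ m ∈ Finset.range M, β m • L (w (2 * m + 1))) - β M • p := by
          rw [e] at h
          rw [← sub_eq_zero, ← h]; module
        rw [this]
        exact Submodule.sub_mem _ (Submodule.neg_mem _ h1) (Submodule.smul_mem _ _ hp)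
      exact (mul_eq_zero.1 (coeff_zero (hw M (by omega)) h2)).resolve_right (hc M)
    rw [hM, zero_smul, add_zero] at h
    intro m hm
    rcases Nat.lt_succ_iff_lt_or_eq.1 hm with hm | rfl
    exacts [ih (fun m hm => hw m (by omega)) h m hm, hM]

/-! ### Invariance and truncation of a sequence satisfying the Verma relations -/

lemma Chain.T0_init (h : Chain q k0 k1 k2 k3 T0 T1 T2 T3 w) (m : ℕ) :
    ∀ x ∈ initSpan F w (2 * m + 1), T0 x ∈ initSpan F w (2 * m + 1) := by
  refine span_stable fun j hj => ?_
  simp only [Set.mem_ofPred_eq] at hj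
  obtain rfl | ⟨l, rfl | rfl⟩ : j = 0 ∨ ∃ l, j = 2 * l + 1 ∨ j = 2 * l + 2 :=
    j.eq_zero_or_pos.imp id fun hj => ⟨(j - 1) / 2, by omega⟩
  · rw [h.T0z]
    exact Submodule.smul_mem _ _ (mem_initSpan hj)
  · rw [h.T0b]
    exact Submodule.smul_mem _ _ (Submodule.sub_mem _ (mem_initSpan hj) (mem_initSpan (by omega)))
  · rw [h.T0a]
    exact Submodule.add_mem _ (Submodule.smul_mem _ _ (mem_initSpan (by omega)))
      (Submodule.smul_mem _ _ (mem_initSpan hj))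

lemma Chain.T3_init (h : Chain q k0 k1 k2 k3 T0 T1 T2 T3 w) (m : ℕ) :
    ∀ x ∈ initSpan F w (2 * m + 1), T3 x ∈ initSpan F w (2 * m + 1) := by
  refine span_stable fun j hj => ?_
  simp only [Set.mem_ofPred_eq] at hj
  obtain ⟨l, rfl | rfl⟩ : ∃ l, j = 2 * l ∨ j = 2 * l + 1 := ⟨j / 2, by omega⟩
  · rw [h.T3a]
    exact Submodule.smul_mem _ _ (mem_initSpan hj)
  · rw [h.T3b]
    exact Submodule.add_mem _ (Submodule.add_mem _ (Submodule.smul_mem _ _ (mem_initSpan (by omega)))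
      (Submodule.smul_mem _ _ (mem_initSpan hj))) (Submodule.smul_mem _ _ (mem_initSpan (by omega)))

lemma Chain.T1_init (h : Chain q k0 k1 k2 k3 T0 T1 T2 T3 w) (m : ℕ) :
    ∀ x ∈ initSpan F w (2 * m), T1 x ∈ initSpan F w (2 * m) := by
  refine span_stable fun j hj => ?_
  simp only [Set.mem_ofPred_eq] at hj
  obtain rfl | ⟨l, rfl | rfl⟩ : j = 0 ∨ ∃ l, j = 2 * l + 1 ∨ j = 2 * l + 2 :=
    j.eq_zero_or_pos.imp id fun hj => ⟨(j - 1) / 2, by omega⟩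
  · rw [h.T1z]
    exact Submodule.add_mem _ (Submodule.smul_mem _ _ (mem_initSpan hj))
      (Submodule.smul_mem _ _ (mem_initSpan (by omega)))
  · rw [h.T1b]
    exact Submodule.smul_mem _ _ (mem_initSpan hj)
  · rw [h.T1a]
    exact Submodule.add_mem _ (Submodule.add_mem _ (Submodule.smul_mem _ _ (mem_initSpan (by omega)))
      (Submodule.smul_mem _ _ (mem_initSpan hj))) (Submodule.smul_mem _ _ (mem_initSpan (by omega)))

lemma Chain.T2_init (h : Chain q k0 k1 k2 k3 T0 T1 T2 T3 w) (m : ℕ) :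
    ∀ x ∈ initSpan F w (2 * m), T2 x ∈ initSpan F w (2 * m) := by
  refine span_stable fun j hj => ?_
  simp only [Set.mem_ofPred_eq] at hj
  obtain ⟨l, rfl | rfl⟩ : ∃ l, j = 2 * l ∨ j = 2 * l + 1 := ⟨j / 2, by omega⟩
  · rw [h.T2a]
    exact Submodule.smul_mem _ _ (Submodule.sub_mem _ (mem_initSpan hj) (mem_initSpan (by omega)))
  · rw [h.T2b]
    exact Submodule.add_mem _ (Submodule.smul_mem _ _ (mem_initSpan (by omega)))
      (Submodule.smul_mem _ _ (mem_initSpan hj))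

/-- If `V` is irreducible and `w₀ ≠ 0` then `w₀, …, wₙ₋₁` is a basis, where `n = dim V`: the first
initial segment containing its successor is an invariant subspace. -/
lemma Chain.basis [FiniteDimensional F V] (h : Chain q k0 k1 k2 k3 T0 T1 T2 T3 w)
    (hs : Simple4 T0 T1 T2 T3) (h0 : w 0 ≠ 0) :
    (∀ j < Module.finrank F V, w j ∉ initSpan F w j) ∧
      initSpan F w (Module.finrank F V) = ⊤ := by
  classical
  have hex : ∃ n, w n ∈ initSpan F w n := by
    by_contra! hn
    have := (linInd_of_notMem (n := Module.finrank F V + 1)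
      fun j _ => hn j).fintype_card_le_finrank
    simp at this
  obtain ⟨n, hn, hmin⟩ : ∃ n, w n ∈ initSpan F w n ∧ ∀ j < n, w j ∉ initSpan F w j :=
    ⟨Nat.find hex, Nat.find_spec hex, fun j hj => Nat.find_min hex hj⟩
  have hpos : 0 < n := by
    rcases n.eq_zero_or_pos with rfl | hp
    · exact absurd (by simpa [initSpan] using hn) h0
    · exact hp
  have hsucc := initSpan_succ_le hn
  have htop : initSpan F w n = ⊤ := by
    have : initSpan F w n = ⊥ ∨ initSpan F w n = ⊤ := by
      obtain ⟨m, rfl | rfl⟩ : ∃ m, n = 2 * m ∨ n = 2 * m + 1 := ⟨n / 2, by omega⟩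
      · exact hs _ (hsucc ▸ h.T0_init m) (h.T1_init m) (h.T2_init m) (hsucc ▸ h.T3_init m)
      · exact hs _ (h.T0_init m) (hsucc ▸ h.T1_init (m + 1)) (hsucc ▸ h.T2_init (m + 1))
          (h.T3_init m)
    refine this.resolve_left fun hb => h0 ?_
    have := mem_initSpan (F := F) (w := w) hpos
    rwa [hb, Submodule.mem_bot] at this
  have hfin : Module.finrank F V = n := by
    have hr : Set.range (fun j : Fin n => w j) = w '' {j | j < n} := by
      ext x; constructor
      · rintro ⟨j, rfl⟩; exact ⟨j, j.2, rfl⟩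
      · rintro ⟨j, hj, rfl⟩; exact ⟨⟨j, hj⟩, rfl⟩
    have := finrank_span_eq_card (linInd_of_notMem hmin)
    rw [hr, ← initSpan, htop, finrank_top, Fintype.card_fin] at this
    exact this
  rw [hfin]
  exact ⟨hmin, htop⟩

lemma Chain.zero_succ (hq : q ≠ 0) (hk0 : k0 ≠ 0) (hk1 : k1 ≠ 0) (hk3 : k3 ≠ 0)
    (h : Chain q k0 k1 k2 k3 T0 T1 T2 T3 w) {j : ℕ} (hj : w j = 0) : w (j + 1) = 0 := by
  obtain ⟨l, rfl | rfl⟩ : ∃ l, j = 2 * l ∨ j = 2 * l + 1 := ⟨j / 2, by omega⟩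
  · have := h.T2a l
    rw [hj, map_zero, zero_sub, eq_comm, smul_eq_zero, neg_eq_zero] at this
    exact this.resolve_left (by positivity)
  · have := h.T0b l
    rw [hj, map_zero, zero_sub, eq_comm, smul_eq_zero, neg_eq_zero] at this
    exact this.resolve_left (by positivity)

/-- If `w` terminates exactly after a basis of an irreducible `V`, then no coefficient of `wᵢ₋₁` in
the relations for `wᵢ` vanishes; otherwise `wᵢ, wᵢ₊₁, …` span a proper invariant subspace. -/
lemma Chain.nonvanishing [FiniteDimensional F V] (hq : q ≠ 0) (hk0 : k0 ≠ 0) (hk1 : k1 ≠ 0)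
    (hk3 : k3 ≠ 0) (h : Chain q k0 k1 k2 k3 T0 T1 T2 T3 w) (hs : Simple4 T0 T1 T2 T3)
    (h0 : w 0 ≠ 0) {D : ℕ} (hD : Module.finrank F V = 2 * D + 2) (hz : w (2 * D + 2) = 0) :
    (∀ m < D, (1 - q ^ (2 * m + 2)) * (1 - k0 ^ 2 * q ^ (2 * m + 2)) ≠ 0) ∧
    (∀ m ≤ D, (k0 * k1 * k3 * q ^ (2 * m + 1) - k2) *
      (k0 * k1 * k3 * q ^ (2 * m + 1) - k2⁻¹) ≠ 0) := by
  classical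
  have hzero : ∀ j, 2 * D + 2 ≤ j → w j = 0 := fun j hj => by
    induction j, hj using Nat.le_induction with
    | base => exact hz
    | succ j _ ih => exact h.zero_succ hq hk0 hk1 hk3 ih
  obtain ⟨hb, -⟩ := h.basis hs h0
  rw [hD] at hb
  have htail : ∀ i, 1 ≤ i → i < 2 * D + 2 → ¬ (tailSpan F w i = ⊥ ∨ tailSpan F w i = ⊤) := by
    rintro i hi hi2 (hbot | htop)
    · have := mem_tailSpan (F := F) (w := w) (le_refl i)
      rw [hbot, Submodule.mem_bot] at this
      exact hb i hi2 (this ▸ Submodule.zero_mem _)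
    · have hle : tailSpan F w i ≤
          Submodule.span F (((Finset.Ico i (2 * D + 2)).image w : Finset V) : Set V) := by
        rw [tailSpan, Submodule.span_le]
        rintro _ ⟨j, hj, rfl⟩
        rcases lt_or_ge j (2 * D + 2) with hj2 | hj2
        · refine Submodule.subset_span ?_
          rw [Finset.coe_image]
          exact ⟨j, by simpa using ⟨hj, hj2⟩, rfl⟩
        · rw [hzero j hj2]; exact Submodule.zero_mem _
      have h1 := Submodule.finrank_mono hle
      rw [htop, finrank_top, hD] at h1
      have h2 := finrank_span_finset_le_card (R := F) ((Finset.Ico i (2 * D + 2)).image w)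
      have h3 : ((Finset.Ico i (2 * D + 2)).image w).card ≤ _ := Finset.card_image_le
      rw [Nat.card_Ico] at h3
      have h4 := h1.trans (h2.trans h3)
      omega
  have key : ∀ i, 1 ≤ i → i < 2 * D + 2 →
      (∀ m, i = 2 * m + 2 → (1 - q ^ (2 * m + 2)) * (1 - k0 ^ 2 * q ^ (2 * m + 2)) = 0) →
      (∀ m, i = 2 * m + 1 → (k0 * k1 * k3 * q ^ (2 * m + 1) - k2) *
        (k0 * k1 * k3 * q ^ (2 * m + 1) - k2⁻¹) = 0) → False := by
    intro i hi hi2 hA hB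
    refine htail i hi hi2 (hs _ ?_ ?_ ?_ ?_)
    all_goals
      refine span_stable fun j hj => ?_
      simp only [Set.mem_ofPred_eq] at hj
      obtain ⟨l, rfl | rfl⟩ : ∃ l, j = 2 * l + 1 ∨ j = 2 * l + 2 := ⟨(j - 1) / 2, by omega⟩
    · rw [h.T0b]
      exact Submodule.smul_mem _ _
        (Submodule.sub_mem _ (mem_tailSpan hj) (mem_tailSpan (by omega)))
    · rw [h.T0a]
      refine Submodule.add_mem _ ?_ (Submodule.smul_mem _ _ (mem_tailSpan hj))
      rcases eq_or_lt_of_le hj with hj | hj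
      · rw [hA l hj, mul_zero, zero_smul]; exact Submodule.zero_mem _
      · exact Submodule.smul_mem _ _ (mem_tailSpan (by omega))
    · rw [h.T1b]
      exact Submodule.smul_mem _ _ (mem_tailSpan hj)
    · rw [h.T1a]
      refine Submodule.add_mem _ (Submodule.add_mem _ ?_ (Submodule.smul_mem _ _ (mem_tailSpan hj)))
        (Submodule.smul_mem _ _ (mem_tailSpan (by omega)))
      rcases eq_or_lt_of_le hj with hj | hj
      · rw [hA l hj, mul_zero, neg_zero, zero_smul]; exact Submodule.zero_mem _
      · exact Submodule.smul_mem _ _ (mem_tailSpan (by omega))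
    · rw [h.T2b]
      refine Submodule.add_mem _ ?_ (Submodule.smul_mem _ _ (mem_tailSpan hj))
      rcases eq_or_lt_of_le hj with hj | hj
      · rw [hB l hj, mul_zero, zero_smul]; exact Submodule.zero_mem _
      · exact Submodule.smul_mem _ _ (mem_tailSpan (by omega))
    · rw [show 2 * l + 2 = 2 * (l + 1) by ring] at hj ⊢
      rw [h.T2a]
      exact Submodule.smul_mem _ _
        (Submodule.sub_mem _ (mem_tailSpan hj) (mem_tailSpan (by omega)))
    · rw [h.T3b]
      refine Submodule.add_mem _ (Submodule.add_mem _ ?_ (Submodule.smul_mem _ _ (mem_tailSpan hj)))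
        (Submodule.smul_mem _ _ (mem_tailSpan (by omega)))
      rcases eq_or_lt_of_le hj with hj | hj
      · rw [hB l hj, mul_zero, neg_zero, zero_smul]; exact Submodule.zero_mem _
      · exact Submodule.smul_mem _ _ (mem_tailSpan (by omega))
    · rw [show 2 * l + 2 = 2 * (l + 1) by ring] at hj ⊢
      rw [h.T3a]
      exact Submodule.smul_mem _ _ (mem_tailSpan hj)
  refine ⟨fun m hm he => key (2 * m + 2) (by omega) (by omega) (fun l hl => ?_) (fun l hl => by omega),
    fun m hm he => key (2 * m + 1) (by omega) (by omega) (fun l hl => by omega) (fun l hl => ?_)⟩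
  · obtain rfl : l = m := by omega
    exact he
  · obtain rfl : l = m := by omega
    exact he

/-- A sequence generating an irreducible `V` of dimension `2D + 2` terminates after a basis as soon
as `T₀ - k₀` has rank at most `D`. -/
lemma Chain.truncation [FiniteDimensional F V] (hq : q ≠ 0) (hk0 : k0 ≠ 0) (hk3 : k3 ≠ 0)
    (h : Chain q k0 k1 k2 k3 T0 T1 T2 T3 w) (hs : Simple4 T0 T1 T2 T3)
    (h0 : w 0 ≠ 0) {D : ℕ} (hD : Module.finrank F V = 2 * D + 2)
    (hk : k0 ^ 2 * q ^ (2 * D + 2) = 1) (hne : ∀ m < D, k0 ^ 2 * q ^ (2 * m + 2) ≠ 1)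
    (hr : Module.finrank F (LinearMap.range (T0 - k0 • (1 : Module.End F V))) ≤ D) :
    w (2 * D + 2) = 0 := by
  obtain ⟨hb, -⟩ := h.basis hs h0
  rw [hD] at hb
  set c : ℕ → F := fun m => k0⁻¹ * (q ^ (2 * m + 2))⁻¹ with hc
  have hc0 : ∀ m, c m ≠ 0 := fun m => by rw [hc]; positivity
  have hL : ∀ m, (T0 - k0 • (1 : Module.End F V)) (w (2 * m + 1)) =
      (c m - k0) • w (2 * m + 1) - c m • w (2 * m + 2) := fun m => by
    rw [LinearMap.sub_apply, h.T0b]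
    simp only [LinearMap.smul_apply, Module.End.one_apply, hc]
    module
  have hck : ∀ m < D, c m - k0 ≠ 0 := fun m hm he => hne m hm (by
    have : c m = k0 := sub_eq_zero.1 he
    have h2 : c m * (k0 * q ^ (2 * m + 2)) = 1 := by simp only [hc]; field_simp
    rw [this] at h2
    rw [← h2]; ring)
  have hcD : c D = k0 := by
    simp only [hc]
    have : (q ^ (2 * D + 2))⁻¹ = k0 ^ 2 := (eq_inv_of_mul_eq_one_left hk).symm
    rw [this]; field_simp
  -- `D + 1` vectors in the range of `T₀ - k₀` are dependent
  have hdep : ∃ β : ℕ → F, (∃ m ≤ D, β m ≠ 0) ∧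
      ∑ m ∈ Finset.range (D + 1), β m • (T0 - k0 • (1 : Module.End F V)) (w (2 * m + 1)) = 0 := by
    by_contra! hcon
    have hli : LinearIndependent F (fun m : Fin (D + 1) =>
        (⟨(T0 - k0 • (1 : Module.End F V)) (w (2 * m + 1)), LinearMap.mem_range_self _ _⟩ :
          LinearMap.range (T0 - k0 • (1 : Module.End F V)))) := by
      rw [Fintype.linearIndependent_iff]
      intro g hg i
      by_contra hgi
      have hi := i.2
      refine hcon (fun m => if hm : m < D + 1 then g ⟨m, hm⟩ else 0)
        ⟨i, by omega, by rw [dif_pos hi]; exact hgi⟩ ?_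
      have h1 := congrArg Subtype.val hg
      rw [AddSubmonoidClass.coe_finsetSum, ZeroMemClass.coe_zero] at h1
      rw [Finset.sum_range, ← h1]
      refine Finset.sum_congr rfl fun j _ => ?_
      rw [dif_pos j.2]
      rfl
    have := hli.fintype_card_le_finrank
    simp only [Fintype.card_fin] at this
    omega
  obtain ⟨β, ⟨m0, hm0, hβ⟩, hsum⟩ := hdep
  rw [Finset.sum_range_succ, hL D, hcD, sub_self, zero_smul, zero_sub] at hsum
  have hlead0 : ∀ m, ∃ p ∈ initSpan F w (2 * m + 2),
      (T0 - k0 • (1 : Module.End F V)) (w (2 * m + 1)) = (-c m) • w (2 * m + 2) + p :=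
    fun m => ⟨(c m - k0) • w (2 * m + 1), Submodule.smul_mem _ _ (mem_initSpan (by omega)), by
      rw [hL]; module⟩
  have hβD : β D ≠ 0 := fun hD0 => by
    rw [hD0, zero_smul, add_zero] at hsum
    have := odd_indep (fun m => neg_ne_zero.2 (hc0 m)) hlead0
      (fun m hm => hb _ (by omega)) β hsum
    rcases eq_or_lt_of_le hm0 with rfl | hlt
    exacts [hβ hD0, hβ (this m0 hlt)]
  -- applying `T₃ - k₃` kills all even-indexed terms of the relation
  have hE : ∀ m, (T3 - k3 • (1 : Module.End F V)) (w (2 * m + 2)) = 0 := fun m => by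
    rw [LinearMap.sub_apply, show 2 * m + 2 = 2 * (m + 1) by ring, h.T3a]
    simp
  have hsum3 : ∑ m ∈ Finset.range D, (β m * (c m - k0)) •
      (T3 - k3 • (1 : Module.End F V)) (w (2 * m + 1)) = 0 := by
    have := congrArg (T3 - k3 • (1 : Module.End F V)) hsum
    rw [map_add, map_smul, map_neg, map_smul, hE, smul_zero, neg_zero, smul_zero, add_zero,
      map_sum, map_zero] at this
    rw [← this]
    refine Finset.sum_congr rfl fun m _ => ?_
    rw [hL, map_smul, map_sub, map_smul, map_smul, hE, smul_zero, sub_zero, smul_smul]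
  have hlead3 : ∀ m, ∃ p ∈ initSpan F w (2 * m + 2),
      (T3 - k3 • (1 : Module.End F V)) (w (2 * m + 1)) = k3 • w (2 * m + 2) + p := fun m => by
    refine ⟨(-(k3⁻¹ * ((k0 * k1 * k3 * q ^ (2 * m + 1) - k2) *
      (k0 * k1 * k3 * q ^ (2 * m + 1) - k2⁻¹)))) • w (2 * m) + (k3⁻¹ - k3) • w (2 * m + 1),
      Submodule.add_mem _ (Submodule.smul_mem _ _ (mem_initSpan (by omega)))
        (Submodule.smul_mem _ _ (mem_initSpan (by omega))), ?_⟩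
    rw [LinearMap.sub_apply, h.T3b]
    simp only [LinearMap.smul_apply, Module.End.one_apply]
    module
  have hall := odd_indep (fun _ => hk3) hlead3 (fun m hm => hb _ (by omega)) _ hsum3
  rw [Finset.sum_eq_zero, zero_add, smul_neg, neg_eq_zero, smul_smul, smul_eq_zero] at hsum
  · exact hsum.resolve_left (mul_ne_zero hβD hk0)
  · intro m hm
    have hm := Finset.mem_range.1 hm
    rw [(mul_eq_zero.1 (hall m hm)).resolve_right (hck m hm), zero_smul]

end Linear

section Dimension

universe v

variable {V : Type v} [AddCommGroup V] [Module F V] {q k0 k1 k2 k3 : F}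
  {T0 T1 T2 T3 : Module.End F V} {w : ℕ → V}

/-! ### Eigenspace dimensions and representations of dimension at most `d` -/

lemma quad_dim [FiniteDimensional F V] {T : Module.End F V} {k : F} (hk : k ≠ 0)
    (h : ∀ v, T (T v) = (k + k⁻¹) • T v - v) :
    Module.finrank F V ≤
      Module.finrank F (T.eigenspace k) + Module.finrank F (T.eigenspace k⁻¹) := by
  rw [← LinearMap.finrank_range_add_finrank_ker (T - k⁻¹ • (1 : Module.End F V)),
    ← Module.End.eigenspace_def]
  refine Nat.add_le_add_right (Submodule.finrank_mono ?_) _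
  rintro _ ⟨v, rfl⟩
  rw [Module.End.mem_eigenspace_iff]
  simp only [LinearMap.sub_apply, LinearMap.smul_apply, Module.End.one_apply, map_sub, map_smul, h]
  match_scalars <;> field_simp; ring

/-- If the `k₀`-eigenspace of `T₀` has more than half the dimension of `V`, it meets an eigenspace
of any operator satisfying a quadratic relation. -/
lemma common_eig [FiniteDimensional F V] {T : Module.End F V} {k : F} (hk : k ≠ 0)
    (h : ∀ v, T (T v) = (k + k⁻¹) • T v - v)
    (hE : Module.finrank F V < 2 * Module.finrank F (T0.eigenspace k0)) :
    ∃ x, (x = k ∨ x = k⁻¹) ∧ ∃ v, v ≠ 0 ∧ T0 v = k0 • v ∧ T v = x • v := by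
  have hd := quad_dim hk h
  obtain ⟨x, hx, hxd⟩ : ∃ x, (x = k ∨ x = k⁻¹) ∧
      Module.finrank F V ≤ 2 * Module.finrank F (T.eigenspace x) := by
    rcases le_total (Module.finrank F (T.eigenspace k)) (Module.finrank F (T.eigenspace k⁻¹))
      with hle | hle
    exacts [⟨k⁻¹, Or.inr rfl, by omega⟩, ⟨k, Or.inl rfl, by omega⟩]
  have h1 := Submodule.finrank_sup_add_finrank_inf_eq (T0.eigenspace k0) (T.eigenspace x)
  have h2 := Submodule.finrank_le (T0.eigenspace k0 ⊔ T.eigenspace x)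
  have hne : T0.eigenspace k0 ⊓ T.eigenspace x ≠ ⊥ := fun hb => by
    rw [hb, finrank_bot] at h1
    omega
  obtain ⟨v, hv, hv0⟩ := Submodule.exists_mem_ne_zero_of_ne_bot hne
  exact ⟨x, hx, v, hv0, Module.End.mem_eigenspace_iff.1 hv.1, Module.End.mem_eigenspace_iff.1 hv.2⟩

lemma eig_count [FiniteDimensional F V] {T : Module.End F V} {x : F} {n : ℕ}
    (h : ∀ j < n, w j ∉ initSpan F w j) (he : ∀ j, T (w j) = x • w j) :
    n ≤ Module.finrank F (T.eigenspace x) := by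
  have hli : LinearIndependent F
      (fun j : Fin n => (⟨w j, Module.End.mem_eigenspace_iff.2 (he j)⟩ : T.eigenspace x)) :=
    LinearIndependent.of_comp (T.eigenspace x).subtype (linInd_of_notMem h)
  simpa using hli.fintype_card_le_finrank

lemma eig_split [FiniteDimensional F V] {T : Module.End F V} {P : Submodule F V}
    (hP : ∀ x ∈ P, T x ∈ P) (k : F) :
    Module.finrank F (T.eigenspace k) ≤
      Module.finrank F (Module.End.eigenspace (T.restrict hP) k) +
        Module.finrank F (Module.End.eigenspace (P.mapQ P T hP) k) := by
  set f : T.eigenspace k →ₗ[F] V ⧸ P := P.mkQ.domRestrict (T.eigenspace k) with hf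
  rw [← LinearMap.finrank_range_add_finrank_ker f, add_comm]
  refine Nat.add_le_add ?_ (Submodule.finrank_mono ?_)
  · rw [← Submodule.finrank_map_subtype_eq (T.eigenspace k) (LinearMap.ker f),
      ← Submodule.finrank_map_subtype_eq P]
    refine Submodule.finrank_mono ?_
    rintro _ ⟨⟨x, hx⟩, hxk, rfl⟩
    have hxP : x ∈ P := (Submodule.Quotient.mk_eq_zero P).1 hxk
    refine ⟨⟨x, hxP⟩, ?_, rfl⟩
    rw [SetLike.mem_coe, Module.End.mem_eigenspace_iff]
    exact Subtype.ext (Module.End.mem_eigenspace_iff.1 hx)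
  · rintro _ ⟨⟨x, hx⟩, rfl⟩
    rw [Module.End.mem_eigenspace_iff]
    exact congrArg P.mkQ (Module.End.mem_eigenspace_iff.1 hx)

/-- The arithmetic conditions of the irreducibility criterion, with the four conditions on products
replaced by the equivalent eight conditions, one for each choice of exponents `±1`. -/
structure Gen (q k0 k1 k2 k3 : F) (d : ℕ) : Prop where
  g1 : ∀ m : ℕ, 2 * m + 2 ≤ d → q ^ (2 * m + 2) ≠ 1
  g2 : ∀ m : ℕ, 2 * m + 2 ≤ d → k0 ^ 2 * q ^ (2 * m + 2) ≠ 1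
  g3 : ∀ m : ℕ, 2 * m + 1 ≤ d → ∀ x y z, (x = k1 ∨ x = k1⁻¹) → (y = k2 ∨ y = k2⁻¹) →
    (z = k3 ∨ z = k3⁻¹) → k0 * x * y * z * q ^ (2 * m + 1) ≠ 1

/-- The first linear dependence in a sequence satisfying the Verma relations cannot express
`wₙ` with `n ≤ d` odd: comparing leading coefficients for `T₁` and `T₂` gives a relation
`k₀ k₁^{±1} k₂^{±1} κ qⁿ = 1`. -/
lemma no_odd [FiniteDimensional F V] {d m : ℕ} {κ : F} (hq : q ≠ 0) (hk0 : k0 ≠ 0) (hk1 : k1 ≠ 0)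
    (hk2 : k2 ≠ 0) (hκ : κ ≠ 0) (hG : Gen q k0 k1 k2 k3 d) (hκ3 : κ = k3 ∨ κ = k3⁻¹)
    (h : Rep4 q k0 k1 k2 κ T0 T1 T2 T3) (hc : Chain q k0 k1 k2 κ T0 T1 T2 T3 w)
    (hn : 2 * m + 1 ≤ d) (hb : w (2 * m) ∉ initSpan F w (2 * m))
    (ht : w (2 * m + 1) ∈ initSpan F w (2 * m + 1)) : False := by
  obtain ⟨a, p, hp, hw⟩ := initSpan_decomp ht
  have e1 : a * (k1 + k1⁻¹ * a) = k1⁻¹ * a := by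
    cases m with
    | zero =>
      exact lead_eig (hc.T1_init 0) hb hp hw (hc.T1b 0) (Submodule.zero_mem _)
        (by rw [add_zero]; exact hc.T1z)
    | succ l =>
      exact lead_eig (hc.T1_init (l + 1)) hb hp hw (hc.T1b (l + 1))
        (Submodule.smul_mem _ _ (mem_initSpan (j := 2 * l + 1) (by omega)))
        ((hc.T1a l).trans (by rw [add_assoc]; exact add_comm _ _))
  have e2 := lead_quad hk2 h.s2 (hc.T2_init m) hb (s := (k0 * k1 * κ * q ^ (2 * m + 1))⁻¹ * (1 - a))
    (Submodule.smul_mem _ (-(k0 * k1 * κ * q ^ (2 * m + 1))⁻¹) hp)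
    (by rw [hc.T2a, hw]; module)
  have e3 : a = 0 ∨ 1 - a = k1 ^ 2 := by
    have : a * (1 - a - k1 ^ 2) = 0 := by
      field_simp at e1
      linear_combination -e1
    rcases mul_eq_zero.1 this with h | h
    exacts [Or.inl h, Or.inr (sub_eq_zero.1 h)]
  have e4 : ∃ x, (x = k1 ∨ x = k1⁻¹) ∧
      (k0 * x * κ * q ^ (2 * m + 1)) * ((k0 * k1 * κ * q ^ (2 * m + 1))⁻¹ * (1 - a)) = 1 := by
    rcases e3 with h | h
    · exact ⟨k1, Or.inl rfl, by rw [h, sub_zero]; field_simp⟩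
    · exact ⟨k1⁻¹, Or.inr rfl, by rw [h]; field_simp⟩
  obtain ⟨x, hx, hx1⟩ := e4
  generalize (k0 * k1 * κ * q ^ (2 * m + 1))⁻¹ * (1 - a) = s at e2 hx1
  exact hG.g3 m hn x _ κ hx e2 hκ3 (by rw [← hx1]; ring)

/-- An irreducible representation of dimension at most `d` cannot have a `k₀`-eigenspace of `T₀` of
more than half the dimension. In even dimension `2m + 2` such an eigenspace would force the
eigenspaces of `T₃` to have dimensions at least `m + 2` and `m + 1`. -/
lemma no_simple [FiniteDimensional F V] {d : ℕ} (hq : q ≠ 0) (hk0 : k0 ≠ 0) (hk1 : k1 ≠ 0)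
    (hk2 : k2 ≠ 0) (hk3 : k3 ≠ 0) (hG : Gen q k0 k1 k2 k3 d)
    (h : Rep4 q k0 k1 k2 k3 T0 T1 T2 T3) (hs : Simple4 T0 T1 T2 T3)
    (hn : Module.finrank F V ≤ d)
    (hE : Module.finrank F V < 2 * Module.finrank F (T0.eigenspace k0)) : False := by
  obtain ⟨κ, hκ3, v, hv, hv0, hv3⟩ := common_eig hk3 h.s3 hE
  have hκ : κ ≠ 0 := by rcases hκ3 with rfl | rfl <;> simpa using hk3
  have hr : Rep4 q k0 k1 k2 κ T0 T1 T2 T3 := by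
    rcases hκ3 with rfl | rfl
    exacts [h, h.inv3]
  have hc := chain_of_eig hq hk0 hk1 hk2 hκ hr hv0 hv3
  set w := seqW q k0 k1 κ T0 T2 v with hw
  obtain ⟨hb, htop⟩ := hc.basis hs (by exact hv)
  have hfin := Submodule.finrank_le (T0.eigenspace k0)
  obtain ⟨m, hm | hm⟩ : ∃ m, Module.finrank F V = 2 * m + 1 ∨ Module.finrank F V = 2 * m + 2 :=
    ⟨(Module.finrank F V - 1) / 2, by omega⟩
  · rw [hm] at htop hb
    exact no_odd hq hk0 hk1 hk2 hκ hG hκ3 hr hc (hm ▸ hn) (hb _ (by omega))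
      (htop ▸ Submodule.mem_top)
  obtain ⟨a, p, hp, hwn⟩ := initSpan_decomp
    (show w (2 * m + 2) ∈ initSpan F w (2 * m + 1 + 1) by
      rw [show 2 * m + 1 + 1 = Module.finrank F V by omega, htop]; exact Submodule.mem_top)
  have hb' := hb (2 * m + 1) (by omega)
  have ha : a ≠ 0 := fun ha => by
    have e2 := lead_quad hk0 h.s0 (hc.T0_init m) hb' (s := k0⁻¹ * (q ^ (2 * m + 2))⁻¹)
      (Submodule.smul_mem _ (-(k0⁻¹ * (q ^ (2 * m + 2))⁻¹)) hp)
      (by rw [hc.T0b, hwn, ha]; module)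
    rcases e2 with e | e
    · refine hG.g2 m (hm ▸ hn) ?_
      field_simp at e
      linear_combination -e
    · refine hG.g1 m (hm ▸ hn) ?_
      field_simp at e
      exact e.symm
  have hκκ : κ ≠ κ⁻¹ := fun hκκ => ha <| by
    have e3 := lead_eig (hc.T3_init m) hb' hp hwn (hc.T3a (m + 1))
      (Submodule.smul_mem _ _ (mem_initSpan (j := 2 * m) (by omega)))
      ((hc.T3b m).trans (by rw [add_assoc, add_comm]))
    rw [← hκκ] at e3
    have : a * a * κ = 0 := by linear_combination e3
    simpa [hκ] using this
  have c1 : m + 2 ≤ Module.finrank F (T3.eigenspace κ) := by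
    refine eig_count (w := fun j => w (2 * j)) (fun j hj hmem => ?_) fun j => hc.T3a j
    have hle : ∀ l, (∀ i < j, 2 * i < l) → w (2 * j) ∈ initSpan F w l := fun l hl =>
      Submodule.span_le.2 (by rintro _ ⟨i, hi, rfl⟩; exact mem_initSpan (hl i hi)) hmem
    rcases Nat.lt_succ_iff_lt_or_eq.1 hj with hj | rfl
    · exact hb _ (by omega) (hle _ fun i hi => by omega)
    · have h1 := hle (2 * m + 1) fun i hi => by omega
      rw [show 2 * (m + 1) = 2 * m + 2 by ring, hwn] at h1
      exact ha (coeff_zero hb' ((Submodule.add_mem_iff_left _ hp).1 h1))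
  have c2 : m + 1 ≤ Module.finrank F (T3.eigenspace κ⁻¹) := by
    obtain ⟨x, hx, u, hu, hu0, hu1⟩ := common_eig hk1 h.s1 hE
    have hx0 : x ≠ 0 := by rcases hx with rfl | rfl <;> simpa using hk1
    have hr' : Rep4 q⁻¹ k0⁻¹ κ⁻¹ k2 x⁻¹ (tinv k0 T0) (tinv κ T3) (tinv k2 T2) (tinv k1 T1) := by
      rcases hx with rfl | rfl
      · exact (hr.mirror hq).inv1.inv3
      · rw [inv_inv]; exact (hr.mirror hq).inv1
    have hc' := chain_of_eig (inv_ne_zero hq) (inv_ne_zero hk0) (inv_ne_zero hκ) hk2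
      (inv_ne_zero hx0) hr' (tinv_eig (Or.inl rfl) hu0) (tinv_eig hx hu1)
    set w' := seqW q⁻¹ k0⁻¹ κ⁻¹ x⁻¹ (tinv k0 T0) (tinv k2 T2) u with hw'
    obtain ⟨hbb, -⟩ := hc'.basis (hs.mirror k0 k1 k2 κ) (by exact hu)
    refine eig_count (w := fun j => w' (2 * j + 1)) (fun j hj hmem => ?_) fun j => ?_
    · exact hbb (2 * j + 1) (by omega)
        (Submodule.span_le.2 (by rintro _ ⟨i, hi, rfl⟩; exact mem_initSpan (by
          have : i < j := hi
          omega)) hmem)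
    · have := hc'.T1b j
      simp only [tinv, LinearMap.sub_apply, LinearMap.smul_apply, Module.End.one_apply, inv_inv]
        at this
      rw [sub_eq_iff_eq_add] at this
      rw [← sub_eq_zero] at this ⊢
      rw [← neg_eq_zero, ← this]
      module
  have hdisj : T3.eigenspace κ ⊓ T3.eigenspace κ⁻¹ = ⊥ :=
    (Module.End.disjoint_genEigenspace T3 hκκ 1 1).eq_bot
  have h1 := Submodule.finrank_sup_add_finrank_inf_eq (T3.eigenspace κ) (T3.eigenspace κ⁻¹)
  have h2 := Submodule.finrank_le (T3.eigenspace κ ⊔ T3.eigenspace κ⁻¹)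
  rw [hdisj, finrank_bot] at h1
  omega

lemma Rep4.restrict (h : Rep4 q k0 k1 k2 k3 T0 T1 T2 T3) {P : Submodule F V}
    (h0 : ∀ x ∈ P, T0 x ∈ P) (h1 : ∀ x ∈ P, T1 x ∈ P) (h2 : ∀ x ∈ P, T2 x ∈ P)
    (h3 : ∀ x ∈ P, T3 x ∈ P) :
    Rep4 q k0 k1 k2 k3 (T0.restrict h0) (T1.restrict h1) (T2.restrict h2) (T3.restrict h3) :=
  ⟨fun v => Subtype.ext (h.s0 v), fun v => Subtype.ext (h.s1 v), fun v => Subtype.ext (h.s2 v),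
    fun v => Subtype.ext (h.s3 v), fun v => Subtype.ext (h.prod v)⟩

lemma Rep4.quot (h : Rep4 q k0 k1 k2 k3 T0 T1 T2 T3) {P : Submodule F V}
    (h0 : ∀ x ∈ P, T0 x ∈ P) (h1 : ∀ x ∈ P, T1 x ∈ P) (h2 : ∀ x ∈ P, T2 x ∈ P)
    (h3 : ∀ x ∈ P, T3 x ∈ P) :
    Rep4 q k0 k1 k2 k3 (P.mapQ P T0 h0) (P.mapQ P T1 h1) (P.mapQ P T2 h2) (P.mapQ P T3 h3) := by
  refine ⟨fun v => ?_, fun v => ?_, fun v => ?_, fun v => ?_, fun v => ?_⟩ <;>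
    obtain ⟨v, rfl⟩ := P.mkQ_surjective v
  exacts [congrArg P.mkQ (h.s0 v), congrArg P.mkQ (h.s1 v), congrArg P.mkQ (h.s2 v),
    congrArg P.mkQ (h.s3 v), congrArg P.mkQ (h.prod v)]

/-- If the `k₀`-eigenspace of `T₀` has more than half the dimension of a reducible `V`, the same
holds for a proper subspace or a proper quotient. -/
lemma descend [FiniteDimensional F V] (h : Rep4 q k0 k1 k2 k3 T0 T1 T2 T3)
    (IH : ∀ (U : Type v) [AddCommGroup U] [Module F U] [FiniteDimensional F U]
      (S0 S1 S2 S3 : Module.End F U), Rep4 q k0 k1 k2 k3 S0 S1 S2 S3 →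
      Module.finrank F U < Module.finrank F V →
      Module.finrank F U < 2 * Module.finrank F (S0.eigenspace k0) → False)
    (hE : Module.finrank F V < 2 * Module.finrank F (T0.eigenspace k0)) :
    Simple4 T0 T1 T2 T3 := by
  intro P h0 h1 h2 h3
  by_contra! hP
  have e1 := eig_split h0 k0
  have e2 := Submodule.finrank_quotient_add_finrank P
  have e3 := Submodule.finrank_lt hP.2
  have e4 : 0 < Module.finrank F P := by
    rw [Module.finrank_pos_iff]
    exact Submodule.nontrivial_iff_ne_bot.2 hP.1
  rcases lt_or_ge (Module.finrank F P)
    (2 * Module.finrank F (Module.End.eigenspace (T0.restrict h0) k0)) with hlt | hge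
  · exact IH P _ _ _ _ (h.restrict h0 h1 h2 h3) e3 hlt
  · exact IH (V ⧸ P) _ _ _ _ (h.quot h0 h1 h2 h3) (by omega) (by omega)

lemma no_small {d : ℕ} (hq : q ≠ 0) (hk0 : k0 ≠ 0) (hk1 : k1 ≠ 0)
    (hk2 : k2 ≠ 0) (hk3 : k3 ≠ 0) (hG : Gen q k0 k1 k2 k3 d) (n : ℕ) (hn : n ≤ d) :
    ∀ (U : Type v) [AddCommGroup U] [Module F U] [FiniteDimensional F U]
      (S0 S1 S2 S3 : Module.End F U), Rep4 q k0 k1 k2 k3 S0 S1 S2 S3 →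
      Module.finrank F U = n →
      Module.finrank F U < 2 * Module.finrank F (S0.eigenspace k0) → False := by
  induction n using Nat.strong_induction_on with
  | _ n ih =>
    intro U _ _ _ S0 S1 S2 S3 h hU hE
    refine no_simple hq hk0 hk1 hk2 hk3 hG h (descend h ?_ hE) (hU ▸ hn) hE
    intro U' _ _ _ S0' S1' S2' S3' h' hlt hE'
    exact ih _ (hU ▸ hlt) (by omega) U' S0' S1' S2' S3' h' rfl hE'

end Dimension

section ModuleE

variable {q k0 k1 k2 k3 : F}

/-! ### The module `E(k₀,k₁,k₂,k₃)` -/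

lemma e_eq_zero {d i : ℕ} (h : d < i) : e F d i = 0 := dif_neg (by omega)

lemma e_ne_zero {d i : ℕ} (h : i ≤ d) : e F d i ≠ 0 := by
  rw [e, dif_pos (Nat.lt_succ_of_le h)]
  simp

lemma span_e (d : ℕ) : Submodule.span F (Set.range (e F d)) = ⊤ := by
  rw [eq_top_iff, ← (Pi.basisFun F (Fin (d + 1))).span_eq]
  refine Submodule.span_mono ?_
  rintro _ ⟨i, rfl⟩
  refine ⟨i, ?_⟩
  rw [e, dif_pos i.2, Pi.basisFun_apply]

/-- The basis of `E`, continued by zeros, satisfies the Verma relations: the coefficient of `v_d` in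
`T₀ v_{d+1}` and `T₁ v_{d+1}` contains the factor `1 - k₀² qᵈ⁺¹ = 0`. -/
lemma IsE.chain {D : ℕ} {T : ZMod 4 → Module.End F (Fin (2 * D + 1 + 1) → F)}
    (hk0 : k0 ≠ 0) (hpar : k0 ^ 2 * q ^ (2 * D + 2) = 1)
    (h : IsE q k0 k1 k2 k3 (2 * D + 1) T) :
    Chain q k0 k1 k2 k3 (T 0) (T 1) (T 2) (T 3) (e F (2 * D + 1)) := by
  obtain ⟨h0a, h0b, h0z, h0d, h1a, h1b, h1z, h2a, h2b, h3a, h3b, h3d⟩ := h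
  have ev : ∀ m, Even (2 * m + 2) := fun m => ⟨m + 1, by ring⟩
  have od : ∀ m, Odd (2 * m + 1) := fun m => ⟨m, rfl⟩
  refine ⟨h0z, fun m => ?_, fun m => ?_, h1z, fun m => ?_, fun m => ?_, fun m => ?_, fun m => ?_,
    fun m => ?_, fun m => ?_⟩
  · rcases lt_trichotomy m D with hm | rfl | hm
    · have := h0a (2 * m + 2) (ev m) (by omega) (by omega)
      rw [this, show 2 * m + 2 - 1 = 2 * m + 1 by omega]
      congr 2; ring
    · rw [e_eq_zero (i := 2 * m + 2) (by omega), hpar]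
      simp
    · rw [e_eq_zero (i := 2 * m + 2) (by omega), e_eq_zero (i := 2 * m + 1) (by omega)]
      simp
  · rcases lt_trichotomy m D with hm | rfl | hm
    · exact h0b (2 * m + 1) (od m) (by omega)
    · rw [h0d, e_eq_zero (i := 2 * m + 2) (by omega), sub_zero,
        (eq_inv_of_mul_eq_one_left hpar).symm]
      congr 1; field_simp
    · rw [e_eq_zero (i := 2 * m + 2) (by omega), e_eq_zero (i := 2 * m + 1) (by omega)]
      simp
  · rcases lt_trichotomy m D with hm | rfl | hm
    · have := h1a (2 * m + 2) (ev m) (by omega) (by omega)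
      rw [this, show 2 * m + 2 - 1 = 2 * m + 1 by omega]
      congr 3; ring
    · rw [e_eq_zero (i := 2 * m + 2) (by omega), e_eq_zero (i := 2 * m + 3) (by omega), hpar]
      simp
    · rw [e_eq_zero (i := 2 * m + 2) (by omega), e_eq_zero (i := 2 * m + 1) (by omega),
        e_eq_zero (i := 2 * m + 3) (by omega)]
      simp
  · rcases le_or_gt m D with hm | hm
    · exact h1b (2 * m + 1) (od m) (by omega)
    · rw [e_eq_zero (i := 2 * m + 1) (by omega)]
      simp
  · rcases le_or_gt m D with hm | hm
    · rw [h2a (2 * m) (even_two_mul m) (by omega)]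
      congr 1; simp only [mul_inv]
    · rw [e_eq_zero (i := 2 * m + 1) (by omega), e_eq_zero (i := 2 * m) (by omega)]
      simp
  · rcases le_or_gt m D with hm | hm
    · rw [h2b (2 * m + 1) (od m) (by omega), show 2 * m + 1 - 1 = 2 * m by omega]
      simp only [mul_inv, mul_assoc]
    · rw [e_eq_zero (i := 2 * m + 1) (by omega), e_eq_zero (i := 2 * m) (by omega)]
      simp
  · rcases le_or_gt m D with hm | hm
    · exact h3a (2 * m) (even_two_mul m) (by omega)
    · rw [e_eq_zero (i := 2 * m) (by omega)]
      simp
  · rcases lt_trichotomy m D with hm | rfl | hm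
    · rw [h3b (2 * m + 1) (od m) (by omega), show 2 * m + 1 - 1 = 2 * m by omega]
      simp only [mul_assoc]
    · rw [h3d, show 2 * m + 1 - 1 = 2 * m by omega, e_eq_zero (i := 2 * m + 2) (by omega)]
      simp only [mul_assoc, smul_zero, add_zero]
    · rw [e_eq_zero (i := 2 * m + 1) (by omega), e_eq_zero (i := 2 * m) (by omega),
        e_eq_zero (i := 2 * m + 2) (by omega)]
      simp

/-- Operators satisfying the Verma relations on a spanning sequence represent `H_q`. -/
lemma Chain.rep {V : Type*} [AddCommGroup V] [Module F V] {T0 T1 T2 T3 : Module.End F V}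
    {w : ℕ → V} (hq : q ≠ 0) (hk0 : k0 ≠ 0) (hk1 : k1 ≠ 0) (hk2 : k2 ≠ 0) (hk3 : k3 ≠ 0)
    (h : Chain q k0 k1 k2 k3 T0 T1 T2 T3 w) (hw : Submodule.span F (Set.range w) = ⊤) :
    Rep4 q k0 k1 k2 k3 T0 T1 T2 T3 := by
  have ext : ∀ A B : Module.End F V, (A (w 0) = B (w 0)) → (∀ m, A (w (2 * m + 1)) = B (w (2 * m + 1)))
      → (∀ m, A (w (2 * m + 2)) = B (w (2 * m + 2))) → ∀ v, A v = B v := by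
    intro A B h0 h1 h2 v
    have : A = B := LinearMap.ext_on_range hw fun j => by
      obtain rfl | ⟨l, rfl | rfl⟩ : j = 0 ∨ ∃ l, j = 2 * l + 1 ∨ j = 2 * l + 2 :=
        j.eq_zero_or_pos.imp id fun hj => ⟨(j - 1) / 2, by omega⟩
      exacts [h0, h1 l, h2 l]
    rw [this]
  have T2z : T2 (w 0) = (k0 * k1 * k3 * q)⁻¹ • (w 0 - w 1) := by simpa using h.T2a 0
  have T1o : T1 (w 1) = k1⁻¹ • w 1 := h.T1b 0
  have T1o' : ∀ m, T1 (w (2 * m + 3)) = k1⁻¹ • w (2 * m + 3) := fun m => h.T1b (m + 1)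
  have T3z : T3 (w 0) = k3 • w 0 := h.T3a 0
  have T3e : ∀ m, T3 (w (2 * m + 2)) = k3 • w (2 * m + 2) := fun m => h.T3a (m + 1)
  have T2e : ∀ m, T2 (w (2 * m + 2)) =
      (k0 * k1 * k3 * q ^ (2 * m + 3))⁻¹ • (w (2 * m + 2) - w (2 * m + 3)) := fun m => h.T2a (m + 1)
  have T2o : T2 (w 1) = ((k0 * k1 * k3 * q)⁻¹ * ((k0 * k1 * k3 * q - k2) *
      (k0 * k1 * k3 * q - k2⁻¹))) • w 0 + (k2 + k2⁻¹ - (k0 * k1 * k3 * q)⁻¹) • w 1 := by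
    simpa using h.T2b 0
  have T2o' : ∀ m, T2 (w (2 * m + 3)) = ((k0 * k1 * k3 * q ^ (2 * m + 3))⁻¹ *
      ((k0 * k1 * k3 * q ^ (2 * m + 3) - k2) * (k0 * k1 * k3 * q ^ (2 * m + 3) - k2⁻¹))) •
        w (2 * m + 2) + (k2 + k2⁻¹ - (k0 * k1 * k3 * q ^ (2 * m + 3))⁻¹) • w (2 * m + 3) :=
    fun m => h.T2b (m + 1)
  have s0 : ∀ v, T0 (T0 v) = (k0 + k0⁻¹) • T0 v - v := by
    refine ext (T0 * T0) ((k0 + k0⁻¹) • T0 - 1) ?_ (fun m => ?_) (fun m => ?_) <;>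
      simp only [Module.End.mul_apply, LinearMap.sub_apply, LinearMap.smul_apply,
        Module.End.one_apply, h.T0z, h.T0a, h.T0b, map_add, map_sub, map_smul] <;>
      match_scalars <;> field_simp <;> ring
  have s1 : ∀ v, T1 (T1 v) = (k1 + k1⁻¹) • T1 v - v := by
    refine ext (T1 * T1) ((k1 + k1⁻¹) • T1 - 1) ?_ (fun m => ?_) (fun m => ?_) <;>
      simp only [Module.End.mul_apply, LinearMap.sub_apply, LinearMap.smul_apply,
        Module.End.one_apply, h.T1z, h.T1a, h.T1b, T1o, T1o', map_add, map_smul] <;>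
      match_scalars <;> field_simp <;> ring
  have s2 : ∀ v, T2 (T2 v) = (k2 + k2⁻¹) • T2 v - v := by
    refine ext (T2 * T2) ((k2 + k2⁻¹) • T2 - 1) ?_ (fun m => ?_) (fun m => ?_) <;>
      simp only [Module.End.mul_apply, LinearMap.sub_apply, LinearMap.smul_apply,
        Module.End.one_apply, T2z, T2o, T2e, T2o', h.T2a, h.T2b, map_add, map_sub, map_smul] <;>
      match_scalars <;> field_simp <;> ring
  have s3 : ∀ v, T3 (T3 v) = (k3 + k3⁻¹) • T3 v - v := by
    refine ext (T3 * T3) ((k3 + k3⁻¹) • T3 - 1) ?_ (fun m => ?_) (fun m => ?_) <;>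
      simp only [Module.End.mul_apply, LinearMap.sub_apply, LinearMap.smul_apply,
        Module.End.one_apply, T3z, T3e, h.T3a, h.T3b, map_add, map_smul] <;>
      match_scalars <;> field_simp <;> ring
  refine ⟨s0, s1, s2, s3, ext (T0 * (T1 * (T2 * T3))) (q⁻¹ • 1) ?_ (fun m => ?_) (fun m => ?_)⟩ <;>
    simp only [Module.End.mul_apply, LinearMap.smul_apply, Module.End.one_apply, h.T0z, h.T0a,
      h.T0b, h.T1z, h.T1a, h.T1b, T1o, T1o', T2z, T2e, h.T2a, h.T2b, T3z, T3e, h.T3b, map_add,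
      map_sub, map_smul] <;>
    match_scalars <;> field_simp <;> ring

/-- The operator `T₀ - k₀` kills `v₀` and `v_d`, and sends `v_{2m+1}` and `v_{2m+2}` to proportional
vectors, so its rank is at most `(d - 1)/2`. -/
lemma Chain.rank {V : Type*} [AddCommGroup V] [Module F V] {T0 T1 T2 T3 : Module.End F V}
    {w : ℕ → V} (hq : q ≠ 0) (hk0 : k0 ≠ 0) {D : ℕ}
    (h : Chain q k0 k1 k2 k3 T0 T1 T2 T3 w) (hw : Submodule.span F (Set.range w) = ⊤)
    (hpar : k0 ^ 2 * q ^ (2 * D + 2) = 1) (hz : ∀ j, 2 * D + 2 ≤ j → w j = 0) :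
    Module.finrank F (LinearMap.range (T0 - k0 • (1 : Module.End F V))) ≤ D := by
  classical
  set A := T0 - k0 • (1 : Module.End F V) with hA
  set b : ℕ → V := fun m => (1 - k0 ^ 2 * q ^ (2 * m + 2)) • w (2 * m + 1) - w (2 * m + 2) with hb
  have hodd : ∀ m, A (w (2 * m + 1)) = (k0⁻¹ * (q ^ (2 * m + 2))⁻¹) • b m := fun m => by
    simp only [hA, hb, LinearMap.sub_apply, LinearMap.smul_apply, Module.End.one_apply, h.T0b]
    match_scalars <;> field_simp
  have heven : ∀ m, A (w (2 * m + 2)) =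
      (k0⁻¹ * (q ^ (2 * m + 2))⁻¹ * (1 - q ^ (2 * m + 2))) • b m := fun m => by
    simp only [hA, hb, LinearMap.sub_apply, LinearMap.smul_apply, Module.End.one_apply, h.T0a]
    match_scalars <;> field_simp; ring
  have hbz : ∀ m, D ≤ m → b m = 0 := fun m hm => by
    simp only [hb]
    rw [hz (2 * m + 2) (by omega), sub_zero]
    rcases eq_or_lt_of_le hm with rfl | hm
    · rw [hpar, sub_self, zero_smul]
    · rw [hz _ (by omega), smul_zero]
  have hle : LinearMap.range A ≤
      Submodule.span F (((Finset.range D).image b : Finset V) : Set V) := by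
    rw [LinearMap.range_eq_map, ← hw, Submodule.map_span, Submodule.span_le]
    have hbm : ∀ m, b m ∈ Submodule.span F (((Finset.range D).image b : Finset V) : Set V) := by
      intro m
      rcases lt_or_ge m D with hm | hm
      · exact Submodule.subset_span (Finset.mem_image_of_mem b (Finset.mem_range.2 hm))
      · rw [hbz m hm]; exact Submodule.zero_mem _
    rintro _ ⟨_, ⟨j, rfl⟩, rfl⟩
    obtain rfl | ⟨l, rfl | rfl⟩ : j = 0 ∨ ∃ l, j = 2 * l + 1 ∨ j = 2 * l + 2 :=
      j.eq_zero_or_pos.imp id fun hj => ⟨(j - 1) / 2, by omega⟩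
    · rw [hA, LinearMap.sub_apply, h.T0z, LinearMap.smul_apply, Module.End.one_apply, sub_self]
      exact Submodule.zero_mem _
    · rw [hodd]; exact Submodule.smul_mem _ _ (hbm l)
    · rw [heven]; exact Submodule.smul_mem _ _ (hbm l)
  have : FiniteDimensional F (Submodule.span F (((Finset.range D).image b : Finset V) : Set V)) :=
    FiniteDimensional.span_finset F _
  refine (Submodule.finrank_mono hle).trans ((finrank_span_finset_le_card _).trans ?_)
  exact Finset.card_image_le.trans (Finset.card_range D).le

/-! ### The two directions of the criterion -/

lemma gen_of_cond {d : ℕ} (hodd : Odd d) (hq : q ≠ 0) (hk0 : k0 ≠ 0) (hk1 : k1 ≠ 0) (hk2 : k2 ≠ 0)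
    (hk3 : k3 ≠ 0) (hpar : k0 ^ 2 * q ^ (d + 1) = 1)
    (h1 : ∀ i : ℕ, Even i → 2 ≤ i → i ≤ d - 1 → q ^ i ≠ 1)
    (h2 : ∀ i : ℕ, Even i → 2 ≤ i → i ≤ d - 1 → k0 ^ 2 ≠ (q ^ i)⁻¹)
    (h3 : ∀ i : ℕ, Odd i → i ≤ d →
         k0 * k1 * k2 * k3 ≠ (q ^ i)⁻¹ ∧ k0 * k1⁻¹ * k2 * k3 ≠ (q ^ i)⁻¹ ∧
         k0 * k1 * k2⁻¹ * k3 ≠ (q ^ i)⁻¹ ∧ k0 * k1 * k2 * k3⁻¹ ≠ (q ^ i)⁻¹) :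
    Gen q k0 k1 k2 k3 d := by
  obtain ⟨D, rfl⟩ := hodd
  refine ⟨fun m hm => h1 _ ⟨m + 1, by ring⟩ (by omega) (by omega), fun m hm he =>
    h2 (2 * m + 2) ⟨m + 1, by ring⟩ (by omega) (by omega) (eq_inv_of_mul_eq_one_left he), ?_⟩
  -- the condition for `(x, y, z)` and `i` is equivalent to that for the inverses and `d + 1 - i`
  have flip : ∀ {m : ℕ}, 2 * m + 1 ≤ 2 * D + 1 → ∀ {x y z : F}, x ≠ 0 → y ≠ 0 → z ≠ 0 →
      k0 * x * y * z * q ^ (2 * m + 1) = 1 →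
      k0 * x⁻¹ * y⁻¹ * z⁻¹ = (q ^ (2 * (D - m) + 1))⁻¹ := by
    intro m hm x y z hx hy hz he
    refine eq_inv_of_mul_eq_one_left ?_
    have hp : q ^ (2 * (D - m) + 1) * q ^ (2 * m + 1) = q ^ (2 * D + 1 + 1) := by
      rw [← pow_add]; congr 1; omega
    have : (k0 * x⁻¹ * y⁻¹ * z⁻¹ * q ^ (2 * (D - m) + 1)) * (k0 * x * y * z * q ^ (2 * m + 1)) = 1 := by
      rw [← hpar, ← hp]; field_simp
    rwa [he, mul_one] at this
  intro m hm x y z hx hy hz he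
  have a := h3 (2 * m + 1) ⟨m, rfl⟩ hm
  have b := h3 (2 * (D - m) + 1) ⟨D - m, rfl⟩ (by omega)
  have he' := eq_inv_of_mul_eq_one_left he
  have fl := flip hm (x := x) (y := y) (z := z) (by rcases hx with rfl | rfl <;> simpa using hk1)
    (by rcases hy with rfl | rfl <;> simpa using hk2)
    (by rcases hz with rfl | rfl <;> simpa using hk3) he
  rcases hx with rfl | rfl <;> rcases hy with rfl | rfl <;> rcases hz with rfl | rfl <;>
    try simp only [inv_inv] at fl
  exacts [a.1 he', a.2.2.2 he', a.2.2.1 he', b.2.1 fl, a.2.1 he', b.2.2.1 fl, b.2.2.2 fl, b.1 fl]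

lemma irred_iff {V : Type*} [AddCommGroup V] [Module F V] (T : ZMod 4 → Module.End F V) :
    Irred T ↔ (∃ v : V, v ≠ 0) ∧ Simple4 (T 0) (T 1) (T 2) (T 3) := by
  refine and_congr_right fun _ => ⟨fun h W h0 h1 h2 h3 => h W fun i => ?_, fun h W hW =>
    h W (hW 0) (hW 1) (hW 2) (hW 3)⟩
  fin_cases i
  exacts [h0, h1, h2, h3]

end ModuleE

/-- irreducibility criterion for `E(k₀,k₁,k₂,k₃)`. -/
theorem statement13 (q : F) (hq : q ≠ 0) (d : ℕ) (hd : 1 ≤ d) (hodd : Odd d)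
    (k0 k1 k2 k3 : F) (hk0 : k0 ≠ 0) (hk1 : k1 ≠ 0) (hk2 : k2 ≠ 0) (hk3 : k3 ≠ 0)
    (hpar : k0 ^ 2 = (q ^ (d + 1))⁻¹)
    (T : ZMod 4 → Module.End F (Fin (d + 1) → F)) (hT : IsE q k0 k1 k2 k3 d T) :
    Irred T ↔
      ((∀ i : ℕ, Even i → 2 ≤ i → i ≤ d - 1 → q ^ i ≠ 1) ∧
       (∀ i : ℕ, Even i → 2 ≤ i → i ≤ d - 1 → k0 ^ 2 ≠ (q ^ i)⁻¹) ∧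
       (∀ i : ℕ, Odd i → i ≤ d →
         k0 * k1 * k2 * k3 ≠ (q ^ i)⁻¹ ∧ k0 * k1⁻¹ * k2 * k3 ≠ (q ^ i)⁻¹ ∧
         k0 * k1 * k2⁻¹ * k3 ≠ (q ^ i)⁻¹ ∧ k0 * k1 * k2 * k3⁻¹ ≠ (q ^ i)⁻¹)) := by
  obtain ⟨D, rfl⟩ := hodd
  have hpar' : k0 ^ 2 * q ^ (2 * D + 2) = 1 := by
    rw [hpar]; exact inv_mul_cancel₀ (pow_ne_zero _ hq)
  have hc := hT.chain hk0 hpar'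
  have hrep := hc.rep hq hk0 hk1 hk2 hk3 (span_e _)
  have hrank := hc.rank hq hk0 (span_e _) hpar' fun j hj => e_eq_zero (by omega)
  have hfin : Module.finrank F (Fin (2 * D + 1 + 1) → F) = 2 * D + 2 := by simp
  have hv0 : e F (2 * D + 1) 0 ≠ 0 := e_ne_zero (by omega)
  rw [irred_iff]
  constructor
  · rintro ⟨-, hs⟩
    obtain ⟨hA, hB⟩ := hc.nonvanishing hq hk0 hk1 hk3 hs hv0 hfin (e_eq_zero (by omega))
    have c2 : ∀ m < D, k0 ^ 2 * q ^ (2 * m + 2) ≠ 1 := fun m hm he => hA m hm (by rw [he]; ring)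
    -- the reflected representation is generated by `v_d`
    have hvd0 : T 0 (e F (2 * D + 1) (2 * D + 1)) = k0 • e F (2 * D + 1) (2 * D + 1) := hT.2.2.2.1
    have hr' := (hrep.mirror hq).inv1
    have hs' := hs.mirror k0 k1 k2 k3
    have hc' := chain_of_eig (inv_ne_zero hq) (inv_ne_zero hk0) (inv_ne_zero hk3) hk2 hk1 hr'
      (tinv_eig (Or.inl rfl) hvd0) ((tinv_eig (Or.inr rfl) (hc.T1b D)).trans (by rw [inv_inv]))
    have hz' := hc'.truncation (inv_ne_zero hq) (inv_ne_zero hk0) hk1 hs' (e_ne_zero le_rfl) hfin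
      (by rw [inv_pow, inv_pow, ← mul_inv, hpar', inv_one])
      (fun m hm he => c2 m hm (by rwa [inv_pow, inv_pow, ← mul_inv, inv_eq_one] at he))
      (by
        refine le_trans (Submodule.finrank_mono ?_) hrank
        rintro _ ⟨v, rfl⟩
        refine ⟨-v, ?_⟩
        simp only [tinv, LinearMap.sub_apply, LinearMap.smul_apply, Module.End.one_apply, map_neg]
        module)
    obtain ⟨-, hB'⟩ := hc'.nonvanishing (inv_ne_zero hq) (inv_ne_zero hk0) (inv_ne_zero hk3) hk1
      hs' (e_ne_zero le_rfl) hfin hz'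
    refine ⟨fun i hi h2 hid he => ?_, fun i hi h2 hid he => ?_, fun i hi hid => ?_⟩
    · obtain ⟨m, rfl⟩ : ∃ m, i = 2 * m + 2 := by
        obtain ⟨l, rfl⟩ := hi; exact ⟨l - 1, by omega⟩
      exact hA m (by omega) (by rw [he]; ring)
    · obtain ⟨m, rfl⟩ : ∃ m, i = 2 * m + 2 := by
        obtain ⟨l, rfl⟩ := hi; exact ⟨l - 1, by omega⟩
      exact c2 m (by omega) (by rw [he]; exact inv_mul_cancel₀ (pow_ne_zero _ hq))
    · obtain ⟨m, rfl⟩ := hi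
      have hp : q ^ (2 * (D - m) + 1) * q ^ (2 * m + 1) = q ^ (2 * D + 2) := by
        rw [← pow_add]; congr 1; omega
      have hQ : q ^ (2 * (D - m) + 1) ≠ 0 := pow_ne_zero _ hq
      have hQ' : q ^ (2 * m + 1) ≠ 0 := pow_ne_zero _ hq
      have b := hB m (by omega)
      have b' := hB' m (by omega)
      have b'' := hB' (D - m) (by omega)
      rw [inv_pow] at b' b''
      rw [← hp] at hpar'
      generalize q ^ (2 * m + 1) = Q at *
      generalize q ^ (2 * (D - m) + 1) = Q' at *
      refine ⟨fun he => b ?_, fun he => b' ?_, fun he => b ?_, fun he => b'' ?_⟩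
      · rw [← inv_inv Q, ← he]
        refine mul_eq_zero_of_right _ ?_
        field_simp; ring
      · refine mul_eq_zero_of_left ?_ _
        rw [← he]; field_simp; ring
      · rw [← inv_inv Q, ← he]
        refine mul_eq_zero_of_left ?_ _
        field_simp; ring
      · refine mul_eq_zero_of_right _ (sub_eq_zero.2 (eq_inv_of_mul_eq_one_left ?_))
        have e1 : Q'⁻¹ = k0 ^ 2 * Q := by
          rw [eq_comm]; exact eq_inv_of_mul_eq_one_left (by rw [← hpar']; ring)
        have e2 : k0 * k1 * k2 * k3⁻¹ * Q = 1 := by rw [he]; exact inv_mul_cancel₀ hQ'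
        rw [e1, ← e2]; field_simp
  · rintro ⟨h1, h2, h3⟩
    have hG := gen_of_cond ⟨D, rfl⟩ hq hk0 hk1 hk2 hk3 hpar' h1 h2 h3
    refine ⟨⟨_, hv0⟩, descend hrep (fun U _ _ _ S0 S1 S2 S3 h hlt hE => ?_) ?_⟩
    · exact no_small hq hk0 hk1 hk2 hk3 hG _ (by omega) U S0 S1 S2 S3 h rfl hE
    · have := LinearMap.finrank_range_add_finrank_ker (T 0 - k0 • (1 : Module.End F _))
      rw [Module.End.eigenspace_def]
      omega

end DAHA
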